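/- arXiv:0801.3074 — 3 statements merged into one kernel-verified Lean document; each statement's English description precedes it below -/
import Mathlib

section
/- The singular locus of the commuting variety is contained in its irregular locus: C^sing ⊆ C^irr. Explicitly, if z = (a,b) ∈ C is a point with dim T_z(C) > dim g + rk g, then dim(g_a ∩ g_b) > rk g. -/
/-!
Differentiating `⁅x, y⁆ = 0` shows that the tangent space at `(a, b)` lies in the kernel of
`(x, y) ↦ ⁅a, y⁆ - ⁅b, x⁆`, whose range is `⁅a, g⁆ + ⁅b, g⁆`. So it suffices that the orthogonal of
`⁅c, g⁆` for the Killing form `κ` lies in the centralizer of `c`.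

By invariance, such an orthogonal `x` has `⁅c, x⁆` in the radical of `κ`, which is central by
Cartan's criterion, so one needs that a central bracket `w = ⁅x, y⁆` vanishes. Given a linear
functional `f`, write `f ⁅u, v⁆ = κ (D u) v` for a linear map `D`. The Jacobi identity says that `D`
is a derivation modulo the center, and then cyclicity of the trace gives
`f w = tr (D ∘ ad w) = 0`.
-/

noncomputable section

namespace CV

variable (k : Type*) [Field k] (V : Type*) [AddCommGroup V] [Module k V] [FiniteDimensional k V]

/-- Coordinates with respect to a chosen basis of `V`. -/
def coordFn (z : V) (i : Module.Free.ChooseBasisIndex k V) : k :=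
  (Module.Free.chooseBasis k V).repr z i

/-- Evaluation of a polynomial (in the chosen coordinates) at a point of `V`. -/
def evalP (F : MvPolynomial (Module.Free.ChooseBasisIndex k V) k) (z : V) : k :=
  MvPolynomial.aeval (coordFn k V z) F

/-- The Zariski topology on `V`: generated by complements of zero sets of polynomial
functions. -/
def zar : TopologicalSpace V :=
  TopologicalSpace.generateFrom
    {U | ∃ F : MvPolynomial (Module.Free.ChooseBasisIndex k V) k, U = {z | evalP k V F z ≠ 0}}

/-- The dimension of a subset of `V`:  the Krull dimension for the topology induced by the
Zariski topology of `V`. -/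
def dimSet (S : Set V) : WithBot ℕ∞ :=
  @topologicalKrullDim S (TopologicalSpace.induced Subtype.val (zar k V))

/-- The differential at `z ∈ V` of a polynomial `F`, as a linear functional on `V`. -/
def diffAt (F : MvPolynomial (Module.Free.ChooseBasisIndex k V) k) (z : V) : V →ₗ[k] k :=
  (Module.Free.chooseBasis k V).constr k fun i => evalP k V (MvPolynomial.pderiv i F) z

/-- The Zariski tangent space at `z` of a subset `S ⊆ V`:  the common kernel of the
differentials at `z` of all polynomial functions vanishing identically on `S`. -/
def tangent (S : Set V) (z : V) : Submodule k V :=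
  ⨅ F ∈ {F | ∀ w ∈ S, evalP k V F w = 0}, LinearMap.ker (diffAt k V F z)

end CV

/-- The commuting variety `C = {(x,y) ∈ g × g | [x,y] = 0}`. -/
def commSet (k : Type*) (g : Type*) [Field k] [LieRing g] [LieAlgebra k g] : Set (g × g) :=
  {p | ⁅p.1, p.2⁆ = 0}

/-- The centralizer `g_x = {y ∈ g | [x,y] = 0}` of an element `x` of a Lie algebra,
as a submodule. -/
def cent (k : Type*) {g : Type*} [Field k] [LieRing g] [LieAlgebra k g] (x : g) :
    Submodule k g := LinearMap.ker (LieAlgebra.ad k g x)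

variable (k : Type*) [Field k] [IsAlgClosed k] [CharZero k]
variable (g : Type*) [LieRing g] [LieAlgebra k g] [FiniteDimensional k g]

lemma sum_coord_mul_apply_basis {ι R M N : Type*} [Fintype ι] [CommSemiring R] [AddCommMonoid M]
    [AddCommMonoid N] [Module R M] [Module R N] (e : Module.Basis ι R M)
    (β : M →ₗ[R] N →ₗ[R] R) (v : M) (w : N) : ∑ i, e.coord i v * β (e i) w = β v w := by
  conv_rhs => rw [← e.sum_repr v, map_sum, LinearMap.sum_apply]
  simp

lemma exists_comp_eq_of_range_le {R M N P : Type*} [Semiring R] [AddCommMonoid M]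
    [AddCommMonoid N] [AddCommMonoid P] [Module R M] [Module R N] [Module R P]
    [Module.Projective R P] (f : M →ₗ[R] N) (g : P →ₗ[R] N)
    (hgf : LinearMap.range g ≤ LinearMap.range f) :
    ∃ h : P →ₗ[R] M, f ∘ₗ h = g := by
  obtain ⟨h, hh⟩ := Module.projective_lifting_property f.rangeRestrict
    (g.codRestrict (LinearMap.range f) fun x => hgf ⟨x, rfl⟩) f.surjective_rangeRestrict
  exact ⟨h, LinearMap.ext fun x => congrArg Subtype.val (LinearMap.congr_fun hh x)⟩

namespace CV

variable {K : Type*} [Field K] {V : Type*} [AddCommGroup V] [Module K V] [FiniteDimensional K V]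

local notation "𝔟" => Module.Free.chooseBasis K V

lemma evalP_sum {ι : Type*} (s : Finset ι)
    (F : ι → MvPolynomial (Module.Free.ChooseBasisIndex K V) K) (z : V) :
    evalP K V (∑ i ∈ s, F i) z = ∑ i ∈ s, evalP K V (F i) z :=
  map_sum _ _ _

lemma evalP_mul (F G : MvPolynomial (Module.Free.ChooseBasisIndex K V) K) (z : V) :
    evalP K V (F * G) z = evalP K V F z * evalP K V G z :=
  map_mul _ _ _

lemma diffAt_sum {ι : Type*} (s : Finset ι)
    (F : ι → MvPolynomial (Module.Free.ChooseBasisIndex K V) K) (z : V) :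
    diffAt K V (∑ i ∈ s, F i) z = ∑ i ∈ s, diffAt K V (F i) z :=
  (𝔟).ext fun j => by
    simp only [diffAt, Module.Basis.constr_basis, LinearMap.sum_apply, map_sum, evalP_sum]

lemma diffAt_mul (F G : MvPolynomial (Module.Free.ChooseBasisIndex K V) K) (z : V) :
    diffAt K V (F * G) z = evalP K V F z • diffAt K V G z + evalP K V G z • diffAt K V F z :=
  (𝔟).ext fun j => by
    simp [diffAt, evalP, Derivation.leibniz]

/-- A linear functional on `V`, written as a polynomial in the chosen coordinates. -/
def linearPoly (f : Module.Dual K V) : MvPolynomial (Module.Free.ChooseBasisIndex K V) K :=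
  ∑ i, MvPolynomial.C (f (𝔟 i)) * MvPolynomial.X i

lemma evalP_linearPoly (f : Module.Dual K V) (z : V) : evalP K V (linearPoly f) z = f z := by
  conv_rhs => rw [← (𝔟).sum_repr z, map_sum]
  simp [linearPoly, evalP, coordFn, mul_comm]

lemma diffAt_linearPoly (f : Module.Dual K V) (z : V) : diffAt K V (linearPoly f) z = f := by
  classical
  refine (𝔟).ext fun j => ?_
  simp [diffAt, linearPoly, evalP, Pi.single_apply]

/-- The quadratic form `w ↦ β w w` of a bilinear form `β` on `V`, written as a polynomial in the
chosen coordinates. -/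
def quadraticPoly (β : LinearMap.BilinForm K V) :
    MvPolynomial (Module.Free.ChooseBasisIndex K V) K :=
  ∑ i, linearPoly ((𝔟).coord i) * linearPoly (β (𝔟 i))

lemma evalP_quadraticPoly (β : LinearMap.BilinForm K V) (z : V) :
    evalP K V (quadraticPoly β) z = β z z := by
  simp only [quadraticPoly, evalP_sum, evalP_mul, evalP_linearPoly, sum_coord_mul_apply_basis]

lemma diffAt_quadraticPoly (β : LinearMap.BilinForm K V) (z v : V) :
    diffAt K V (quadraticPoly β) z v = β z v + β v z := by
  simp only [quadraticPoly, diffAt_sum, diffAt_mul, evalP_linearPoly, diffAt_linearPoly,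
    LinearMap.sum_apply, LinearMap.add_apply, LinearMap.smul_apply, smul_eq_mul,
    Finset.sum_add_distrib, mul_comm (β _ z), sum_coord_mul_apply_basis]

lemma diffAt_eq_zero_of_mem_tangent {S : Set V} {z v : V} (hv : v ∈ tangent K V S z)
    {F : MvPolynomial (Module.Free.ChooseBasisIndex K V) K} (hF : ∀ w ∈ S, evalP K V F w = 0) :
    diffAt K V F z v = 0 := by
  simp only [tangent, Submodule.mem_iInf] at hv
  exact hv F hF

lemma bilinear_add_eq_zero_of_mem_tangent {W : Type*} [AddCommGroup W] [Module K W]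
    (φ : V →ₗ[K] V →ₗ[K] W) {S : Set V} (hS : ∀ w ∈ S, φ w w = 0) {z v : V}
    (hv : v ∈ tangent K V S z) : φ z v + φ v z = 0 := by
  rw [← Module.forall_dual_apply_eq_zero_iff K]
  intro f
  have vanishes : ∀ w ∈ S, evalP K V (quadraticPoly (φ.compr₂ f)) w = 0 := fun w hw => by
    rw [evalP_quadraticPoly, LinearMap.compr₂_apply, hS w hw, map_zero]
  simpa only [diffAt_quadraticPoly, LinearMap.compr₂_apply, map_add] using
    diffAt_eq_zero_of_mem_tangent hv vanishes

end CV

section KillingForm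

variable {R L : Type*} [CommRing R] [LieRing L] [LieAlgebra R L]

lemma leibniz_defect_mem_killingCompl_top {f : Module.Dual R L} {D : L →ₗ[R] L}
    (hD : ∀ x y, killingForm R L (D x) y = f ⁅x, y⁆) (x y : L) :
    D ⁅x, y⁆ - ⁅x, D y⁆ - ⁅D x, y⁆ ∈ LieIdeal.killingCompl R L ⊤ := by
  rw [LieIdeal.mem_killingCompl]
  intro v _
  have jacobi : f ⁅⁅x, y⁆, v⁆ = f ⁅x, ⁅y, v⁆⁆ - f ⁅y, ⁅x, v⁆⁆ := by rw [lie_lie, map_sub]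
  rw [LieModule.traceForm_comm, map_sub, map_sub, LinearMap.sub_apply, LinearMap.sub_apply,
    LieModule.traceForm_apply_lie_apply' R L L x, LieModule.traceForm_apply_lie_apply R L L (D x),
    hD, hD, hD, jacobi]
  ring

lemma killingForm_apply_eq_trace_comp_ad {D : L →ₗ[R] L}
    (hD : ∀ x y, D ⁅x, y⁆ - ⁅x, D y⁆ - ⁅D x, y⁆ ∈ LieAlgebra.center R L) (x y : L) :
    killingForm R L (D x) y = LinearMap.trace R L (D ∘ₗ LieAlgebra.ad R L ⁅x, y⁆) := by
  let X : Module.End R L := LieAlgebra.ad R L x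
  let Y : Module.End R L := LieAlgebra.ad R L y
  let D' : Module.End R L := D
  have ad_mul_ad : Y * LieAlgebra.ad R L (D x) = Y * (D' * X - X * D') := by
    ext v
    have h : ⁅y, D ⁅x, v⁆ - ⁅x, D v⁆ - ⁅D x, v⁆⁆ = 0 := hD x v y
    rw [lie_sub, sub_eq_zero] at h
    exact h.symm
  calc killingForm R L (D x) y
      = LinearMap.trace R L (Y * (D' * X - X * D')) := by
        rw [← ad_mul_ad, LieModule.traceForm_comm]; rfl
    _ = LinearMap.trace R L (D' * (X * Y - Y * X)) := by
        rw [mul_sub, mul_sub, map_sub, map_sub, LinearMap.trace_mul_comm R Y, mul_assoc,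
          ← mul_assoc Y, LinearMap.trace_mul_comm R (Y * X)]
    _ = LinearMap.trace R L (D ∘ₗ LieAlgebra.ad R L ⁅x, y⁆) := by
        congr 2
        ext v
        exact (lie_lie x y v).symm

variable {K : Type*} [Field K] [LieAlgebra K L] [FiniteDimensional K L]

lemma range_killingForm_eq_dualAnnihilator_ker :
    LinearMap.range (killingForm K L) = (LinearMap.ker (killingForm K L)).dualAnnihilator := by
  rw [LinearMap.dualAnnihilator_ker_eq_range_flip, LieModule.traceForm_flip]

lemma exists_killingForm_apply_eq_dual_lie
    (hκ : LieIdeal.killingCompl K L ⊤ ≤ LieAlgebra.center K L) (f : Module.Dual K L) :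
    ∃ D : L →ₗ[K] L, ∀ x y, killingForm K L (D x) y = f ⁅x, y⁆ := by
  let φ : L →ₗ[K] Module.Dual K L := (LieModule.toEnd K L L : L →ₗ[K] Module.End K L).compr₂ f
  have hφ : LinearMap.range φ ≤ LinearMap.range (killingForm K L) := by
    rintro _ ⟨x, rfl⟩
    rw [range_killingForm_eq_dualAnnihilator_ker, ← LieIdeal.coe_killingCompl_top,
      Submodule.mem_dualAnnihilator]
    intro z hz
    have hxz : ⁅x, z⁆ = 0 := hκ hz x
    exact (congrArg f hxz).trans (map_zero f)
  obtain ⟨D, hD⟩ := exists_comp_eq_of_range_le (killingForm K L) φ hφ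
  exact ⟨D, LinearMap.congr_fun₂ hD⟩

lemma lie_eq_zero_of_lie_mem_center (hκ : LieIdeal.killingCompl K L ⊤ ≤ LieAlgebra.center K L)
    {x y : L} (hxy : ⁅x, y⁆ ∈ LieAlgebra.center K L) : ⁅x, y⁆ = 0 := by
  rw [← Module.forall_dual_apply_eq_zero_iff K]
  intro f
  obtain ⟨D, hD⟩ := exists_killingForm_apply_eq_dual_lie hκ f
  have ad_eq_zero : LieAlgebra.ad K L ⁅x, y⁆ = 0 := LinearMap.ext fun v => by
    rw [LieAlgebra.ad_apply, ← lie_skew, hxy v, neg_zero, LinearMap.zero_apply]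
  have leibniz_mod_center (u v : L) : D ⁅u, v⁆ - ⁅u, D v⁆ - ⁅D u, v⁆ ∈ LieAlgebra.center K L :=
    hκ (leibniz_defect_mem_killingCompl_top hD u v)
  rw [← hD, killingForm_apply_eq_trace_comp_ad leibniz_mod_center, ad_eq_zero,
    LinearMap.comp_zero, map_zero]

lemma orthogonal_range_ad_le_cent (hκ : LieIdeal.killingCompl K L ⊤ ≤ LieAlgebra.center K L)
    (c : L) :
    (killingForm K L).orthogonal (LinearMap.range (LieAlgebra.ad K L c)) ≤ cent K c := by
  intro x hx
  have mem_killingCompl : ⁅c, x⁆ ∈ LieIdeal.killingCompl K L ⊤ := by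
    rw [LieIdeal.mem_killingCompl]
    intro v _
    have hvx : killingForm K L ⁅c, v⁆ x = 0 := hx _ ⟨v, rfl⟩
    rwa [LieModule.traceForm_apply_lie_apply', neg_eq_zero] at hvx
  exact lie_eq_zero_of_lie_mem_center hκ (hκ mem_killingCompl)

lemma finrank_le_finrank_range_ad_sup_add_finrank_cent_inf
    (hκ : LieIdeal.killingCompl K L ⊤ ≤ LieAlgebra.center K L) (a b : L) :
    Module.finrank K L ≤
      Module.finrank K ↥(LinearMap.range (LieAlgebra.ad K L a) ⊔
        LinearMap.range (LieAlgebra.ad K L b)) +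
      Module.finrank K ↥(cent K a ⊓ cent K b) := by
  set W := LinearMap.range (LieAlgebra.ad K L a) ⊔ LinearMap.range (LieAlgebra.ad K L b)
  have orthogonal_le : (killingForm K L).orthogonal W ≤ cent K a ⊓ cent K b :=
    le_inf
      ((LinearMap.BilinForm.orthogonal_le le_sup_left).trans (orthogonal_range_ad_le_cent hκ a))
      ((LinearMap.BilinForm.orthogonal_le le_sup_right).trans (orthogonal_range_ad_le_cent hκ b))
  calc Module.finrank K L
      ≤ Module.finrank K W + Module.finrank K ((killingForm K L).orthogonal W) := by
        rw [LinearMap.BilinForm.finrank_add_finrank_orthogonal']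
        exact Nat.le_add_right _ _
    _ ≤ Module.finrank K W + Module.finrank K ↥(cent K a ⊓ cent K b) :=
        Nat.add_le_add_left (Submodule.finrank_mono orthogonal_le) _

end KillingForm

section CommutingVariety

/-- The differential `(x, y) ↦ ⁅a, y⁆ - ⁅b, x⁆` of the bracket at `(a, b)`. -/
def bracketDifferential (R : Type*) {L : Type*} [CommRing R] [LieRing L] [LieAlgebra R L]
    (a b : L) : L × L →ₗ[R] L :=
  (-(LieAlgebra.ad R L b : Module.End R L)).coprod (LieAlgebra.ad R L a)

lemma range_bracketDifferential {R L : Type*} [CommRing R] [LieRing L] [LieAlgebra R L]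
    (a b : L) :
    LinearMap.range (bracketDifferential R a b) =
      LinearMap.range (LieAlgebra.ad R L a) ⊔ LinearMap.range (LieAlgebra.ad R L b) := by
  rw [bracketDifferential, LinearMap.range_coprod, LinearMap.range_neg, sup_comm]

variable {K L : Type*} [Field K] [LieRing L] [LieAlgebra K L] [FiniteDimensional K L]

lemma tangent_commSet_le_ker_bracketDifferential (a b : L) :
    CV.tangent K (L × L) (commSet K L) (a, b) ≤
      LinearMap.ker (bracketDifferential K a b) := by
  intro v hv
  let φ : L × L →ₗ[K] L × L →ₗ[K] L :=
    (LieModule.toEnd K L L : L →ₗ[K] Module.End K L).compl₁₂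
      (LinearMap.fst K L L) (LinearMap.snd K L L)
  have hφ : ⁅a, v.2⁆ + ⁅v.1, b⁆ = 0 :=
    CV.bilinear_add_eq_zero_of_mem_tangent φ (fun _ hw => hw) hv
  rw [← lie_skew v.1 b, add_comm] at hφ
  exact hφ

theorem singular_subset_irregular_general
    (hκ : LieIdeal.killingCompl K L ⊤ ≤ LieAlgebra.center K L) (a b : L) :
    Module.finrank K ↥(CV.tangent K (L × L) (commSet K L) (a, b)) ≤
      Module.finrank K L + Module.finrank K ↥(cent K a ⊓ cent K b) := by
  have tangent_le := Submodule.finrank_mono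
    (tangent_commSet_le_ker_bracketDifferential (K := K) a b)
  have rank_nullity := (bracketDifferential K a b).finrank_range_add_finrank_ker
  have range_ge := finrank_le_finrank_range_ad_sup_add_finrank_cent_inf hκ a b
  rw [range_bracketDifferential, Module.finrank_prod] at rank_nullity
  omega

end CommutingVariety

/-- The singular locus of the commuting variety is contained in its
irregular locus:  if `z = (a,b) ∈ C` is a point with `dim T_z(C) > dim g + rk g`, then
`dim (g_a ∩ g_b) > rk g`. -/
theorem singular_subset_irregular
    (hred : LieAlgebra.radical k g = LieAlgebra.center k g) (hnc : ¬IsLieAbelian g)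
    (t : LieSubalgebra k g) (ht : t.IsCartanSubalgebra)
    (a b : g) (hab : (a, b) ∈ commSet k g)
    (hsing : Module.finrank k g + Module.finrank k ↥t
      < Module.finrank k ↥(CV.tangent k (g × g) (commSet k g) (a, b))) :
    Module.finrank k ↥t < Module.finrank k ↥(cent k a ⊓ cent k b) := by
  have := singular_subset_irregular_general
    ((LieAlgebra.killingCompl_top_le_radical k g).trans hred.le) a b
  omega
end
end

section
/- Assume Conjecture (R) holds for g, i.e. the ideal of polynomial functions on g × g vanishing on C is generated by the functions (a,b) ↦ l([a,b]) for l ∈ g* (the coordinates of the commutator map). Then the singular locus equals the irregular locus: C^sing = C^irr. -/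
noncomputable section

variable (k : Type*) [Field k] [IsAlgClosed k] [CharZero k]
variable (g : Type*) [LieRing g] [LieAlgebra k g] [FiniteDimensional k g]

/-!
Under Conjecture (R) the tangent space of the commuting variety at `z = (x, y)` is the kernel of the
differential `v ↦ [x, v₂] + [v₁, y]` of the commutator map. If `B` is a nondegenerate invariant form
on `g`, the `B`-orthogonal of the image of this differential is `g_x ∩ g_y`, so by rank-nullity the
tangent space has dimension `dim g + dim (g_x ∩ g_y)`, and both loci are cut out by the same
inequality.

For reductive `g` such a form is the sum of the Killing form of the semisimple quotient `g / Z` and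
any nondegenerate form on the centre `Z`, extended by zero along a complement containing `[g, g]`.
That `Z ∩ [g, g] = 0` holds because for `f ∈ g*` the form `f [a, b]` descends to a 2-cocycle on
`g / Z`, and such cocycles are coboundaries since all derivations of `g / Z` are inner.
-/

namespace CV

theorem exists_retraction_of_disjoint {K V : Type*} [Field K] [AddCommGroup V] [Module K V]
    {Z D : Submodule K V} (hZD : Disjoint Z D) :
    ∃ p : V →ₗ[K] Z, (∀ z : Z, p z = z) ∧ ∀ d ∈ D, p d = 0 := by
  obtain ⟨D', hDD', hcompl⟩ := hZD.symm.exists_isCompl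
  exact ⟨Z.projectionOnto D' hcompl.symm, Submodule.projectionOnto_apply_left hcompl.symm,
    fun d hd => Submodule.projectionOnto_apply_of_mem_right hcompl.symm (hDD' hd)⟩

section Solvable

open LieAlgebra

variable {R L L' : Type*} [CommRing R] [LieRing L] [LieAlgebra R L] [LieRing L'] [LieAlgebra R L']

theorem derivedSeriesOfIdeal_comap_le (f : L →ₗ⁅R⁆ L') (J : LieIdeal R L') (n : ℕ) :
    derivedSeriesOfIdeal R L n (J.comap f) ≤ (derivedSeriesOfIdeal R L' n J).comap f := by
  induction n with
  | zero => rfl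
  | succ n ih =>
    rw [derivedSeriesOfIdeal_succ, derivedSeriesOfIdeal_succ]
    exact (LieSubmodule.mono_lie ih ih).trans (LieIdeal.comap_bracket_le f)

theorem isSolvable_comap (f : L →ₗ⁅R⁆ L') (J : LieIdeal R L') [IsSolvable f.ker] [IsSolvable J] :
    IsSolvable (J.comap f) := by
  obtain ⟨m, hm⟩ := IsSolvable.solvable R f.ker
  obtain ⟨n, hn⟩ := IsSolvable.solvable R J
  rw [LieIdeal.derivedSeries_eq_bot_iff] at hm hn
  have le_ker : derivedSeriesOfIdeal R L n (J.comap f) ≤ f.ker := by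
    have h := derivedSeriesOfIdeal_comap_le f J n
    rwa [hn] at h
  refine IsSolvable.mk (R := R) (k := m + n) ?_
  rw [LieIdeal.derivedSeries_eq_bot_iff, derivedSeriesOfIdeal_add, eq_bot_iff, ← hm]
  exact derivedSeriesOfIdeal_mono le_ker m

/-- The quotient map by a Lie ideal, as a morphism of Lie algebras (`LieSubmodule.Quotient.mk'`
is the same map as a morphism of Lie modules). -/
def quotientMk (I : LieIdeal R L) : L →ₗ⁅R⁆ L ⧸ I :=
  { (LieSubmodule.Quotient.mk' I : L →ₗ[R] L ⧸ I) with map_lie' := rfl }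

theorem quotientMk_surjective (I : LieIdeal R L) : Function.Surjective (quotientMk I) :=
  LieSubmodule.Quotient.surjective_mk' I

theorem ker_quotientMk (I : LieIdeal R L) : (quotientMk I).ker = I := by
  ext a
  exact LieHom.mem_ker.trans (LieSubmodule.Quotient.mk_eq_zero I)

theorem hasTrivialRadical_quotient_radical [IsNoetherian R L] :
    HasTrivialRadical R (L ⧸ radical R L) := by
  refine hasTrivialRadical_of_no_solvable_ideals fun J hJ => ?_
  have : IsSolvable (quotientMk (radical R L)).ker := by
    rw [ker_quotientMk]; infer_instance
  have comap_le : J.comap (quotientMk (radical R L)) ≤ radical R L :=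
    (LieIdeal.solvable_iff_le_radical R L _).mp (isSolvable_comap _ J)
  refine (LieSubmodule.eq_bot_iff J).mpr fun u hu => ?_
  obtain ⟨a, rfl⟩ := quotientMk_surjective (radical R L) u
  rw [← LieHom.mem_ker, ker_quotientMk]
  exact comap_le (LieIdeal.mem_comap.mpr hu)

end Solvable

section InvariantForm

open LieAlgebra Module

variable {K L S : Type*} [Field K] [LieRing L] [LieAlgebra K L]
  [LieRing S] [LieAlgebra K S]

theorem lie_eq_lie_of_sub_mem_center {a a' b b' : L} (ha : a - a' ∈ center K L)
    (hb : b - b' ∈ center K L) : ⁅a, b⁆ = ⁅a', b'⁆ := by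
  have hab : ⁅b, a⁆ = ⁅b, a'⁆ := by simpa [sub_eq_zero] using ha b
  have hab' : ⁅a', b⁆ = ⁅a', b'⁆ := by simpa [sub_eq_zero] using hb a'
  rw [← lie_skew, hab, lie_skew, hab']

theorem exists_lieInvariant_nondegenerate_of_disjoint [FiniteDimensional K L]
    {π : L →ₗ⁅K⁆ S} (hπ : Function.Surjective π)
    (hdisj : Disjoint (LinearMap.ker (π : L →ₗ[K] S))
      (⁅(⊤ : LieIdeal K L), (⊤ : LieIdeal K L)⁆).toSubmodule)
    {Φ : LinearMap.BilinForm K S} (hΦ : Φ.SeparatingLeft) (hΦinv : Φ.lieInvariant S) :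
    ∃ B : LinearMap.BilinForm K L, B.Nondegenerate ∧ B.lieInvariant L := by
  obtain ⟨p, p_coe, p_derived⟩ := exists_retraction_of_disjoint hdisj
  have p_lie (a b : L) : p ⁅a, b⁆ = 0 :=
    p_derived _ (LieSubmodule.lie_mem_lie (LieSubmodule.mem_top a) (LieSubmodule.mem_top b))
  let e := (finBasis K (LinearMap.ker (π : L →ₗ[K] S))).toDual
  let B : LinearMap.BilinForm K L :=
    Φ.compl₁₂ (π : L →ₗ[K] S) (π : L →ₗ[K] S) + e.compl₁₂ p p
  have B_apply (a b : L) : B a b = Φ (π a) (π b) + e (p a) (p b) := rfl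
  refine ⟨B, ?_, fun a b c => ?_⟩
  · rw [LinearMap.BilinForm.nondegenerate_iff_ker_eq_bot, LinearMap.ker_eq_bot']
    intro a ha
    have B_eq_zero (b : L) : Φ (π a) (π b) + e (p a) (p b) = 0 := LinearMap.congr_fun ha b
    have pa : p a = 0 := (finBasis K _).toDual_injective <| LinearMap.ext fun z => by
      have hπz : π z = 0 := z.2
      simpa [hπz, p_coe] using B_eq_zero z
    have πa : π a = 0 := hΦ (π a) fun u => by
      obtain ⟨b, rfl⟩ := hπ u
      simpa [pa] using B_eq_zero b
    exact (congrArg Subtype.val (p_coe ⟨a, πa⟩)).symm.trans (congrArg Subtype.val pa)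
  · simp [B_apply, p_lie, hΦinv (π a) (π b) (π c)]

variable [FiniteDimensional K S]

-- Through the Killing form a 2-cocycle becomes a derivation, and every derivation of `S` is inner.
theorem exists_killingForm_lie_eq_of_cocycle [IsKilling K S] (ω : LinearMap.BilinForm K S)
    (hω : ∀ u v w, ω u ⁅v, w⁆ = ω ⁅u, v⁆ w + ω v ⁅u, w⁆) :
    ∃ w, ∀ u v, ω u v = killingForm K S w ⁅u, v⁆ := by
  have nondeg := IsKilling.killingForm_nondegenerate K S
  let D₀ : S →ₗ[K] S := LinearMap.BilinForm.symmCompOfNondegenerate ω (killingForm K S) nondeg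
  have killingForm_D₀ (u v : S) : killingForm K S (D₀ u) v = ω u v :=
    LinearMap.BilinForm.symmCompOfNondegenerate_left_apply ω nondeg v u
  have leibniz (u v : S) : D₀ ⁅u, v⁆ = ⁅u, D₀ v⁆ - ⁅v, D₀ u⁆ := by
    refine (LinearMap.BilinForm.toDual _ nondeg).injective (LinearMap.ext fun w => ?_)
    simp only [LinearMap.BilinForm.toDual_def, map_sub, LinearMap.sub_apply, killingForm_D₀,
      LieModule.traceForm_lieInvariant K S S _ _ w, hω u v w]
    ring
  obtain ⟨w, hw⟩ := LieDerivation.IsKilling.exists_eq_ad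
    ({ D₀ with leibniz' := leibniz } : LieDerivation K S S)
  have D₀_eq (u : S) : D₀ u = ⁅w, u⁆ := by
    rw [← LieDerivation.ad_apply_apply K S, hw]; rfl
  exact ⟨w, fun u v => by
    rw [← killingForm_D₀, D₀_eq, LieModule.traceForm_apply_lie_apply]⟩

theorem exists_killingForm_map_lie_eq [IsKilling K S] {π : L →ₗ⁅K⁆ S}
    (hπ : Function.Surjective π) (hker : π.ker ≤ center K L) (f : Dual K L) :
    ∃ w : S, ∀ a b : L, f ⁅a, b⁆ = killingForm K S w (π ⁅a, b⁆) := by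
  obtain ⟨σ, hσ⟩ := (π : L →ₗ[K] S).exists_rightInverse_of_surjective
    (LinearMap.range_eq_top.mpr hπ)
  have σ_sub_mem (a : L) : σ (π a) - a ∈ center K L :=
    hker (LieHom.mem_ker.mpr (by simpa [sub_eq_zero] using LinearMap.congr_fun hσ (π a)))
  let ω : LinearMap.BilinForm K S := ((ad K L : L →ₗ[K] End K L).compr₂ f).compl₁₂ σ σ
  have ω_apply (a b : L) : ω (π a) (π b) = f ⁅a, b⁆ :=
    congrArg f (lie_eq_lie_of_sub_mem_center (σ_sub_mem a) (σ_sub_mem b))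
  obtain ⟨w, hw⟩ := exists_killingForm_lie_eq_of_cocycle ω (fun u v w => by
    obtain ⟨a, rfl⟩ := hπ u
    obtain ⟨b, rfl⟩ := hπ v
    obtain ⟨c, rfl⟩ := hπ w
    simp only [← LieHom.map_lie, ω_apply, ← map_add, ← leibniz_lie])
  exact ⟨w, fun a b => by rw [← ω_apply, hw, LieHom.map_lie]⟩

-- A functional `f` agrees on `⁅L, L⁆` with one that factors through `π`, so it kills
-- `π.ker ∩ ⁅L, L⁆`.
theorem disjoint_ker_derived [IsKilling K S] {π : L →ₗ⁅K⁆ S} (hπ : Function.Surjective π)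
    (hker : π.ker ≤ center K L) :
    Disjoint (LinearMap.ker (π : L →ₗ[K] S))
      (⁅(⊤ : LieIdeal K L), (⊤ : LieIdeal K L)⁆).toSubmodule := by
  rw [Submodule.disjoint_def]
  intro c hc hcD
  rw [← forall_dual_apply_eq_zero_iff K]
  intro f
  obtain ⟨w, hw⟩ := exists_killingForm_map_lie_eq hπ hker f
  have derived_le : (⁅(⊤ : LieIdeal K L), (⊤ : LieIdeal K L)⁆).toSubmodule ≤
      LinearMap.eqLocus f (killingForm K S w ∘ₗ (π : L →ₗ[K] S)) := by
    rw [LieSubmodule.lieIdeal_oper_eq_linear_span', Submodule.span_le]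
    rintro _ ⟨a, -, b, -, rfl⟩
    exact hw a b
  have hπc : π c = 0 := hc
  simpa [hπc] using derived_le hcD

theorem exists_lieInvariant_nondegenerate [CharZero K] [FiniteDimensional K L]
    [HasCentralRadical K L] :
    ∃ B : LinearMap.BilinForm K L, B.Nondegenerate ∧ B.lieInvariant L := by
  have := hasTrivialRadical_quotient_radical (R := K) (L := L)
  have surj := quotientMk_surjective (radical K L)
  have ker_le : (quotientMk (radical K L)).ker ≤ center K L := by
    rw [ker_quotientMk, radical_eq_center]
  exact exists_lieInvariant_nondegenerate_of_disjoint surj (disjoint_ker_derived surj ker_le)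
    (IsKilling.killingForm_nondegenerate K _).1 (LieModule.traceForm_lieInvariant K _ _)

end InvariantForm

section DualNumbers

open MvPolynomial TrivSqZeroExt
open Module.Free (ChooseBasisIndex)

variable {K V : Type*} [Field K] [AddCommGroup V] [Module K V] [FiniteDimensional K V]

/-- Evaluation of a polynomial at the point `z + ε v` over the dual numbers. Its kernel is an ideal,
which makes first-order vanishing conditions checkable on generators. -/
def evalDual (z v : V) : MvPolynomial (ChooseBasisIndex K V) K →ₐ[K] DualNumber K :=
  aeval fun i => inl (coordFn K V z i) + inr (coordFn K V v i)

theorem fst_evalDual (F : MvPolynomial (ChooseBasisIndex K V) K) (z v : V) :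
    (evalDual z v F).fst = evalP K V F z := by
  have : (fstHom K K K).comp (evalDual z v) = aeval (coordFn K V z) := by
    ext i; simp [evalDual]
  exact DFunLike.congr_fun this F

theorem snd_evalDual (F : MvPolynomial (ChooseBasisIndex K V) K) (z v : V) :
    (evalDual z v F).snd = diffAt K V F z v := by
  have diffAt_apply (G : MvPolynomial (ChooseBasisIndex K V) K) :
      diffAt K V G z v = ∑ i, coordFn K V v i * aeval (coordFn K V z) (pderiv i G) :=
    Module.Basis.constr_apply_fintype ..
  induction F using MvPolynomial.induction_on with
  | C a => simp [diffAt_apply, evalDual, algebraMap_eq_inl]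
  | add p q hp hq => simp_all [mul_add, Finset.sum_add_distrib]
  | mul_X p i hp =>
    classical
    rw [map_mul, DualNumber.snd_mul, hp, fst_evalDual, diffAt_apply, diffAt_apply]
    simp [evalDual, evalP, pderiv_X, Pi.single_apply, mul_add, Finset.sum_add_distrib,
      Finset.mul_sum, apply_ite, mul_comm, mul_left_comm]

theorem tangent_eq_of_vanishing_eq_span {S : Set V}
    {G : Set (MvPolynomial (ChooseBasisIndex K V) K)}
    (hS : {F | ∀ w ∈ S, evalP K V F w = 0} = ↑(Ideal.span G)) {z : V} (hz : z ∈ S) :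
    tangent K V S z = ⨅ F ∈ G, LinearMap.ker (diffAt K V F z) := by
  rw [tangent, hS]
  refine le_antisymm (biInf_mono fun F hF => Ideal.subset_span hF) fun v hv => ?_
  simp only [Submodule.mem_iInf, LinearMap.mem_ker] at hv ⊢
  have span_le : Ideal.span G ≤ RingHom.ker (evalDual z v) := Ideal.span_le.mpr fun F hF => by
    have hFS : F ∈ {F | ∀ w ∈ S, evalP K V F w = 0} := hS ▸ Ideal.subset_span hF
    exact TrivSqZeroExt.ext ((fst_evalDual F z v).trans (hFS z hz))
      ((snd_evalDual F z v).trans (hv F hF))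
  intro F hF
  rw [← snd_evalDual, RingHom.mem_ker.mp (span_le hF), snd_zero]

theorem evalP_injective [Infinite K] :
    Function.Injective (evalP K V : MvPolynomial (ChooseBasisIndex K V) K → V → K) := by
  refine fun F G hFG => MvPolynomial.funext fun x => ?_
  obtain ⟨z, rfl⟩ := (Module.Free.chooseBasis K V).equivFun.surjective x
  exact congrFun hFG z

/-- The quadratic polynomial representing `z ↦ β z z` for a bilinear form `β`. -/
def bilinPoly (β : LinearMap.BilinForm K V) : MvPolynomial (ChooseBasisIndex K V) K :=
  ∑ i, ∑ j, C (β (Module.Free.chooseBasis K V i) (Module.Free.chooseBasis K V j)) * (X i * X j)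

theorem evalDual_bilinPoly (β : LinearMap.BilinForm K V) (z v : V) :
    evalDual z v (bilinPoly β) = inl (β z z) + inr (β z v + β v z) := by
  have β_apply (x y : V) : β x y = ∑ i, ∑ j, β (Module.Free.chooseBasis K V i)
      (Module.Free.chooseBasis K V j) * (coordFn K V x i * coordFn K V y j) := by
    conv_lhs => rw [← LinearMap.sum_repr_mul_repr_mul (Module.Free.chooseBasis K V)
      (Module.Free.chooseBasis K V)]
    simp [coordFn, Finsupp.sum_fintype, mul_comm, mul_assoc]
  rw [β_apply z z, β_apply z v, β_apply v z]
  ext <;> simp only [bilinPoly, evalDual, map_sum, map_mul, algHom_C, aeval_X, algebraMap_eq_inl,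
    fst_sum, snd_sum, fst_mul, snd_mul] <;> simp [mul_add, Finset.sum_add_distrib]

theorem evalP_bilinPoly (β : LinearMap.BilinForm K V) (z : V) :
    evalP K V (bilinPoly β) z = β z z := by
  rw [← fst_evalDual _ z 0, evalDual_bilinPoly]
  simp

theorem diffAt_bilinPoly (β : LinearMap.BilinForm K V) (z v : V) :
    diffAt K V (bilinPoly β) z v = β z v + β v z := by
  rw [← snd_evalDual, evalDual_bilinPoly]
  simp

end DualNumbers

section CommutingVariety

open LieAlgebra Module

variable {K L : Type*} [Field K] [LieRing L] [LieAlgebra K L]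

variable (K) in
/-- The differential `v ↦ [z₁, v₂] + [v₁, z₂]` at `z` of the commutator map `L × L → L`. -/
def commDeriv (z : L × L) : L × L →ₗ[K] L :=
  ad K L z.1 ∘ₗ LinearMap.snd K L L - ad K L z.2 ∘ₗ LinearMap.fst K L L

theorem commDeriv_apply (z v : L × L) : commDeriv K z v = ⁅z.1, v.2⁆ - ⁅z.2, v.1⁆ := rfl

theorem orthogonal_range_commDeriv {B : LinearMap.BilinForm K L} (hB : B.SeparatingRight)
    (hBinv : B.lieInvariant L) (z : L × L) :
    B.orthogonal (LinearMap.range (commDeriv K z)) = cent K z.1 ⊓ cent K z.2 := by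
  have B_commDeriv (v : L × L) (a : L) :
      B (commDeriv K z v) a = B v.1 ⁅z.2, a⁆ - B v.2 ⁅z.1, a⁆ := by
    rw [commDeriv_apply, map_sub, LinearMap.sub_apply, hBinv z.1, hBinv z.2]
    ring
  ext a
  have mem_orthogonal : a ∈ B.orthogonal (LinearMap.range (commDeriv K z)) ↔
      ∀ v : L × L, B v.1 ⁅z.2, a⁆ - B v.2 ⁅z.1, a⁆ = 0 := by
    rw [LinearMap.BilinForm.mem_orthogonal_iff]
    exact Set.forall_mem_range.trans (forall_congr' fun v => by rw [B_commDeriv])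
  have mem_cent : a ∈ cent K z.1 ⊓ cent K z.2 ↔ ⁅z.1, a⁆ = 0 ∧ ⁅z.2, a⁆ = 0 := Iff.rfl
  rw [mem_orthogonal, mem_cent]
  refine ⟨fun h => ⟨hB _ fun b => ?_, hB _ fun b => ?_⟩, fun h v => by simp [h]⟩
  · simpa using h (0, b)
  · simpa using h (b, 0)

/-- The bilinear form `(z, w) ↦ l [z₁, w₂]` on `L × L`, whose diagonal is the coordinate
`l` of the commutator map. -/
def commForm (l : Dual K L) : LinearMap.BilinForm K (L × L) :=
  ((ad K L : L →ₗ[K] End K L).compr₂ l).compl₁₂ (LinearMap.fst K L L) (LinearMap.snd K L L)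

theorem commForm_apply (l : Dual K L) (z w : L × L) : commForm l z w = l ⁅z.1, w.2⁆ := rfl

variable [FiniteDimensional K L]

theorem finrank_ker_commDeriv {B : LinearMap.BilinForm K L} (hB : B.Nondegenerate)
    (hBinv : B.lieInvariant L) (z : L × L) :
    finrank K (LinearMap.ker (commDeriv K z)) =
      finrank K L + finrank K ↥(cent K z.1 ⊓ cent K z.2) := by
  have rank_nullity := LinearMap.finrank_range_add_finrank_ker (commDeriv K z)
  rw [finrank_prod] at rank_nullity
  have range_le := (LinearMap.range (commDeriv K z)).finrank_le
  rw [← orthogonal_range_commDeriv hB.2 hBinv, LinearMap.BilinForm.finrank_orthogonal hB]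
  lia

variable (K L) in
/-- Conjecture (R): the ideal of polynomials vanishing on the commuting variety is generated by
the coordinates of the commutator map. -/
def ConjectureR : Prop :=
  {F | ∀ z ∈ commSet K L, evalP K (L × L) F z = 0} =
    ↑(Ideal.span {F : MvPolynomial (Module.Free.ChooseBasisIndex K (L × L)) K |
      ∃ l : Dual K L, ∀ z : L × L, evalP K (L × L) F z = l ⁅z.1, z.2⁆})

theorem setOf_evalP_eq_dual_lie [Infinite K] :
    {F : MvPolynomial (Module.Free.ChooseBasisIndex K (L × L)) K |
      ∃ l : Dual K L, ∀ z : L × L, evalP K (L × L) F z = l ⁅z.1, z.2⁆} =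
    Set.range fun l : Dual K L => bilinPoly (commForm l) := by
  ext F
  refine exists_congr fun l => ⟨fun h => evalP_injective (funext fun z => ?_), ?_⟩
  · rw [evalP_bilinPoly, h, commForm_apply]
  · rintro rfl z
    rw [evalP_bilinPoly, commForm_apply]

theorem tangent_commSet [Infinite K] (hR : ConjectureR K L) {z : L × L} (hz : z ∈ commSet K L) :
    tangent K (L × L) (commSet K L) z = LinearMap.ker (commDeriv K z) := by
  have diffAt_comm (l : Dual K L) (v : L × L) :
      diffAt K (L × L) (bilinPoly (commForm l)) z v = l (commDeriv K z v) := by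
    rw [diffAt_bilinPoly, commForm_apply, commForm_apply, ← map_add, commDeriv_apply,
      ← lie_skew v.1, sub_eq_add_neg]
  rw [tangent_eq_of_vanishing_eq_span hR hz, setOf_evalP_eq_dual_lie]
  ext v
  simp [diffAt_comm, forall_dual_apply_eq_zero_iff]

theorem finrank_tangent_commSet [Infinite K] {B : LinearMap.BilinForm K L} (hB : B.Nondegenerate)
    (hBinv : B.lieInvariant L) (hR : ConjectureR K L) {z : L × L} (hz : z ∈ commSet K L) :
    finrank K (tangent K (L × L) (commSet K L) z) =
      finrank K L + finrank K ↥(cent K z.1 ⊓ cent K z.2) := by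
  rw [tangent_commSet hR hz, finrank_ker_commDeriv hB hBinv]

end CommutingVariety

end CV

theorem singular_eq_irregular_of_conjR_general {K L : Type*} [Field K] [Infinite K]
    [LieRing L] [LieAlgebra K L] [FiniteDimensional K L] {B : LinearMap.BilinForm K L}
    (hB : B.Nondegenerate) (hBinv : B.lieInvariant L)
    (t : LieSubalgebra K L) (_ht : t.IsCartanSubalgebra) (hR : CV.ConjectureR K L) :
    {z ∈ commSet K L |
        Module.finrank K L + Module.finrank K ↥t
          < Module.finrank K ↥(CV.tangent K (L × L) (commSet K L) z)} =
      {z ∈ commSet K L |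
        Module.finrank K ↥t < Module.finrank K ↥(cent K z.1 ⊓ cent K z.2)} := by
  ext z
  refine and_congr_right fun hz => ?_
  rw [CV.finrank_tangent_commSet hB hBinv hR hz, Nat.add_lt_add_iff_left]

/-- Assume Conjecture (R) holds for `g`: the ideal of polynomial functions
on `g × g` vanishing on the commuting variety `C` is generated by the coordinates of the
commutator map, i.e. by the polynomials representing the functions `(a,b) ↦ l ([a,b])` for
`l ∈ g*`.  Then the singular locus of `C` equals its irregular locus. -/
theorem singular_eq_irregular_of_conjR
    (hred : LieAlgebra.radical k g = LieAlgebra.center k g) (hnc : ¬IsLieAbelian g)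
    (t : LieSubalgebra k g) (ht : t.IsCartanSubalgebra)
    (hR : {F | ∀ z ∈ commSet k g, CV.evalP k (g × g) F z = 0} =
      ↑(Ideal.span {F : MvPolynomial (Module.Free.ChooseBasisIndex k (g × g)) k |
          ∃ l : Module.Dual k g, ∀ z : g × g, CV.evalP k (g × g) F z = l ⁅z.1, z.2⁆})) :
    {z ∈ commSet k g |
        Module.finrank k g + Module.finrank k ↥t
          < Module.finrank k ↥(CV.tangent k (g × g) (commSet k g) z)} =
      {z ∈ commSet k g |
        Module.finrank k ↥t < Module.finrank k ↥(cent k z.1 ⊓ cent k z.2)} := by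
  have : LieAlgebra.HasCentralRadical k g := ⟨hred⟩
  obtain ⟨B, hB, hBinv⟩ := CV.exists_lieInvariant_nondegenerate (K := k) (L := g)
  exact singular_eq_irregular_of_conjR_general hB hBinv t ht hR
end
end

section
/- The irregular locus of the commuting variety has codimension at least 2: codim_C C^irr ≥ 2, i.e. every irreducible component X of C^irr satisfies dim X ≤ dim g + rk g − 2. -/
noncomputable section

variable (k : Type*) [Field k] [IsAlgClosed k] [CharZero k]
variable (g : Type*) [LieRing g] [LieAlgebra k g] [FiniteDimensional k g]

/-- The irregular locus of the commuting variety:  points `(x,y) ∈ C` with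
`dim (g_x ∩ g_y) > rk g`. -/
def Cirr (t : LieSubalgebra k g) : Set (g × g) :=
  {z ∈ commSet k g | Module.finrank k ↥t < Module.finrank k ↥(cent k z.1 ⊓ cent k z.2)}

/-!
Replacing `g` by its quotient by the centre, we may assume that the Killing form of `g` is
nondegenerate. Let `(x, y)` be the generic point of an irreducible subset `X` of the irregular
locus, with coordinates in an algebraic closure `L` of the function field of `X`. The dimension of
`X` is at most the dimension of the space of all `(D x, D y)` with `D` an `L`-valued derivation.

Let `x = s + n` be the Jordan decomposition. Derivations preserve the Jordan decomposition up to
conjugation, so `D x` lies in `𝔷(g_s) + [x, g]`, where `𝔷(g_s)` is the centre of the centralizer of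
`s`, and differentiating `[x, y] = 0` fixes `D y` modulo `g_x` once `D x` is known. This bounds
`dim X` by `dim 𝔷(g_s) + dim g`, which suffices if `dim 𝔷(g_s) ≤ rk g - 2`. Otherwise at most one
pair of roots vanishes at `s`, so that `dim g_s ≤ rk g + 2`. The centralizer in `g_s` of an element
of `g_s` outside `𝔷(g_s)` is the kernel of a nonzero alternating form on `g_s`, so it has
codimension at least `2`; as `dim (g_x ∩ g_y) > rk g`, both `x` and `y` lie in `𝔷(g_s)`. Then
`g_x = g_s`, and once `D x` is known `D y` is fixed even modulo `𝔷(g_s)`, which is enough.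
-/

namespace CommutingVariety

section NilpotentCommutators

variable {A : Type*} [Ring A] {a b : A}

lemma pow_succ_mul_eq_of_commute_lie (h : Commute a ⁅a, b⁆) (i : ℕ) :
    a ^ (i + 1) * b = b * a ^ (i + 1) + (i + 1) • (⁅a, b⁆ * a ^ i) := by
  induction i with
  | zero => simp [Ring.lie_def]
  | succ i ih =>
    have hab : a * b = b * a + ⁅a, b⁆ := by simp [Ring.lie_def]
    calc a ^ (i + 2) * b = a * (a ^ (i + 1) * b) := by rw [pow_succ' a (i + 1), mul_assoc]
      _ = a * b * a ^ (i + 1) + (i + 1) • (a * ⁅a, b⁆ * a ^ i) := by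
        rw [ih, mul_add, mul_smul_comm, mul_assoc, mul_assoc]
      _ = b * a ^ (i + 2) + ⁅a, b⁆ * a ^ (i + 1) + (i + 1) • (⁅a, b⁆ * a ^ (i + 1)) := by
        rw [hab, h.eq, add_mul, mul_assoc b, mul_assoc ⁅a, b⁆ a, ← pow_succ', ← pow_succ']
      _ = _ := by rw [succ_nsmul' _ (i + 1), add_assoc]

variable [IsAddTorsionFree A]

lemma isNilpotent_lie_of_commute_lie (ha : IsNilpotent a) (h : Commute a ⁅a, b⁆) :
    IsNilpotent ⁅a, b⁆ := by
  set z := ⁅a, b⁆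
  obtain ⟨p, hp⟩ := ha
  suffices descent : ∀ i e : ℕ, z ^ e * a ^ i = 0 → IsNilpotent z from
    descent p 0 (by simp [hp])
  intro i
  induction i with
  | zero => exact fun e he => ⟨e, by simpa using he⟩
  | succ i ih =>
    intro e he
    refine ih (e + 1 + e) ?_
    have hcomm : a ^ (i + 1) * z ^ e = 0 := by rw [(h.pow_pow (i + 1) e).eq, he]
    have hmul : (i + 1) • (z ^ e * (z * a ^ i) * z ^ e) = 0 := by
      calc (i + 1) • (z ^ e * (z * a ^ i) * z ^ e)
          = z ^ e * (b * a ^ (i + 1) + (i + 1) • (z * a ^ i)) * z ^ e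
            - z ^ e * b * (a ^ (i + 1) * z ^ e) := by
            rw [mul_add, add_mul, mul_smul_comm, smul_mul_assoc]; noncomm_ring
        _ = z ^ e * a ^ (i + 1) * b * z ^ e - z ^ e * b * (a ^ (i + 1) * z ^ e) := by
            rw [← pow_succ_mul_eq_of_commute_lie h, ← mul_assoc]
        _ = 0 := by rw [he, hcomm]; simp
    calc z ^ (e + 1 + e) * a ^ i = z ^ e * (z * a ^ i) * z ^ e := by
          simp only [pow_add, pow_one, mul_assoc, (h.pow_pow i e).eq]
      _ = 0 := (nsmul_eq_zero_iff_right (Nat.succ_ne_zero i)).mp hmul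

-- `a * b` preserves the filtration by the kernels of the `a ^ i`, and acts on its `i`-th graded
-- piece as `i • ⁅a, b⁆`, which is nilpotent.
lemma isNilpotent_mul_of_commute_lie (ha : IsNilpotent a) (h : Commute a ⁅a, b⁆) :
    IsNilpotent (a * b) := by
  obtain ⟨q, hq⟩ := isNilpotent_lie_of_commute_lie ha h
  obtain ⟨p, hp⟩ := ha
  have step (i : ℕ) (v : A) (hv : a ^ (i + 1) * v = 0) :
      a ^ i * (a * b * v) = (i + 1) • (⁅a, b⁆ * (a ^ i * v)) := by
    rw [← mul_assoc, ← mul_assoc, ← pow_succ, pow_succ_mul_eq_of_commute_lie h, add_mul,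
      mul_assoc, hv, mul_zero, zero_add, smul_mul_assoc, mul_assoc]
  have stable (i : ℕ) (v : A) (hv : a ^ (i + 1) * v = 0) : a ^ (i + 1) * (a * b * v) = 0 := by
    rw [pow_succ', mul_assoc, step i v hv, mul_smul_comm, ← mul_assoc, h.eq, mul_assoc,
      ← mul_assoc a, ← pow_succ', hv, mul_zero, smul_zero]
  have iterate (i : ℕ) (v : A) (hv : a ^ (i + 1) * v = 0) (m : ℕ) :
      a ^ (i + 1) * ((a * b) ^ m * v) = 0 ∧
        a ^ i * ((a * b) ^ m * v) = (i + 1) ^ m • (⁅a, b⁆ ^ m * (a ^ i * v)) := by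
    induction m with
    | zero => simp [hv]
    | succ m ih =>
      rw [pow_succ' (a * b), mul_assoc]
      refine ⟨stable i _ ih.1, ?_⟩
      rw [step i _ ih.1, ih.2, mul_smul_comm, smul_smul, ← mul_assoc, ← pow_succ', ← pow_succ']
  suffices filtration : ∀ i (v : A), a ^ i * v = 0 → (a * b) ^ (q * i) * v = 0 from
    ⟨q * p, by simpa using filtration p 1 (by simp [hp])⟩
  intro i
  induction i with
  | zero => simp
  | succ i ih =>
    intro v hv
    rw [mul_add, mul_one, pow_add, mul_assoc]
    exact ih _ (by rw [(iterate i v hv q).2, hq, zero_mul, smul_zero])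

end NilpotentCommutators

section LinearAlgebra

variable {K V : Type*} [Field K] [AddCommGroup V] [Module K V] [FiniteDimensional K V]

lemma isCompl_ker_range_of_isSemisimple {f : Module.End K V} (hf : f.IsSemisimple) :
    IsCompl (LinearMap.ker f) (LinearMap.range f) := by
  have hdisj : Disjoint (LinearMap.ker f) (LinearMap.range f) := by
    rw [Submodule.disjoint_def]
    rintro _ hv ⟨v, rfl⟩
    have hv' : v ∈ f.genEigenspace 0 (2 : ℕ) := by
      rw [Module.End.mem_genEigenspace_nat]
      simpa [pow_two] using hv
    rw [hf.isFinitelySemisimple.genEigenspace_eq_eigenspace 0 (by norm_num)] at hv'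
    simpa using hv'
  refine IsCompl.of_eq hdisj.eq_bot (Submodule.eq_top_of_disjoint _ _ ?_ hdisj)
  rw [add_comm, LinearMap.finrank_range_add_finrank_ker]

lemma mem_range_of_forall_mem_ker {B : LinearMap.BilinForm K V} (hB : B.Nondegenerate)
    (hrefl : B.IsRefl) {f f' : Module.End K V} (hf : ∀ v w, B (f v) w = B v (f' w)) {v : V}
    (hv : ∀ c, f' c = 0 → B v c = 0) : v ∈ LinearMap.range f := by
  rw [← LinearMap.BilinForm.orthogonal_orthogonal hB hrefl (LinearMap.range f),
    LinearMap.BilinForm.mem_orthogonal_iff]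
  intro c hc
  rw [LinearMap.BilinForm.mem_orthogonal_iff] at hc
  refine hrefl _ _ (hv c (hB.1 _ fun w => hrefl _ _ ?_))
  rw [← hf]
  exact hc _ ⟨w, rfl⟩

end LinearAlgebra

section Centralizers

variable {K G : Type*} [Field K] [LieRing G] [LieAlgebra K G] {s x y a b : G}

lemma mem_cent : y ∈ cent K x ↔ ⁅x, y⁆ = 0 := Iff.rfl

lemma mem_cent_comm : y ∈ cent K x ↔ x ∈ cent K y := by
  rw [mem_cent, mem_cent, ← lie_skew, neg_eq_zero]

lemma self_mem_cent (x : G) : x ∈ cent K x := lie_self x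

lemma lie_mem_cent (ha : a ∈ cent K s) (hb : b ∈ cent K s) : ⁅a, b⁆ ∈ cent K s := by
  rw [mem_cent] at ha hb ⊢
  rw [leibniz_lie, ha, hb, zero_lie, lie_zero, add_zero]

variable (K) in
/-- The double centralizer of `s`, that is, the centre `𝔷(g_s)` of the centralizer of `s`. -/
def doubleCent (s : G) : Submodule K G := ⨅ d ∈ cent K s, cent K d

lemma mem_doubleCent : y ∈ doubleCent K s ↔ ∀ d ∈ cent K s, ⁅d, y⁆ = 0 := by
  simp only [doubleCent, Submodule.mem_iInf, mem_cent]

lemma self_mem_doubleCent (s : G) : s ∈ doubleCent K s :=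
  mem_doubleCent.mpr fun _ hd => mem_cent_comm.mp hd

lemma doubleCent_le_cent (s : G) : doubleCent K s ≤ cent K s :=
  fun _ hc => mem_doubleCent.mp hc s (self_mem_cent s)

lemma killingForm_lie_apply (x y z : G) :
    killingForm K G ⁅x, y⁆ z = killingForm K G x ⁅y, z⁆ :=
  LieModule.traceForm_apply_lie_apply K G G x y z

lemma killingForm_comm (x y : G) : killingForm K G x y = killingForm K G y x :=
  LieModule.traceForm_comm K G G x y

lemma killingForm_ad_apply (x y z : G) :
    killingForm K G ⁅x, y⁆ z = -killingForm K G y ⁅x, z⁆ := by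
  rw [← lie_skew, map_neg, LinearMap.neg_apply, killingForm_lie_apply]

lemma killingForm_lie_eq_zero_of_mem_cent (hb : b ∈ cent K s) (c : G) :
    killingForm K G s ⁅b, c⁆ = 0 := by
  rw [← killingForm_lie_apply, mem_cent.mp hb, map_zero, LinearMap.zero_apply]

lemma lie_ad_ad (a b : G) :
    ⁅LieAlgebra.ad K G a, LieAlgebra.ad K G b⁆ = LieAlgebra.ad K G ⁅a, b⁆ := by
  ext
  simp [Ring.lie_def]

lemma killingForm_eq_zero_of_isNilpotent [CharZero K] [FiniteDimensional K G] {n c : G}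
    (hn : IsNilpotent (LieAlgebra.ad K G n)) (h : ⁅n, ⁅n, c⁆⁆ = 0) : killingForm K G n c = 0 := by
  have : IsAddTorsionFree (Module.End K G) := .of_isTorsionFree K _
  rw [killingForm_apply_apply]
  refine (LinearMap.isNilpotent_trace_of_isNilpotent (isNilpotent_mul_of_commute_lie hn ?_)).eq_zero
  rw [commute_iff_lie_eq, lie_ad_ad, lie_ad_ad, h, map_zero]

end Centralizers

section JordanDecomposition

variable {K G : Type*} [Field K] [LieRing G] [LieAlgebra K G]

/-- `s` and `n` are the semisimple and nilpotent parts of `s + n` in the Lie algebra `G`. -/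
structure IsJordanPair (K : Type*) {G : Type*} [Field K] [LieRing G] [LieAlgebra K G]
    (s n : G) : Prop where
  isSemisimple : (LieAlgebra.ad K G s).IsSemisimple
  isNilpotent : IsNilpotent (LieAlgebra.ad K G n)
  right_mem_cent : n ∈ cent K s

variable [FiniteDimensional K G] [IsAlgClosed K]

lemma apply_lie_of_forall_mem_maxGenEigenspace {x : G} {S : Module.End K G}
    (hS : ∀ α, ∀ y ∈ (LieAlgebra.ad K G x).maxGenEigenspace α, S y = α • y) (y z : G) :
    S ⁅y, z⁆ = ⁅S y, z⁆ + ⁅y, S z⁆ := by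
  have mem_iSup (y : G) : y ∈ ⨆ α, (LieAlgebra.ad K G x).maxGenEigenspace α := by
    rw [Module.End.iSup_maxGenEigenspace_eq_top]
    trivial
  induction mem_iSup y using Submodule.iSup_induction' with
  | zero => simp
  | add _ _ _ _ h h' => rw [add_lie, map_add, h, h', map_add, add_lie, add_lie]; abel
  | mem α y hy =>
    induction mem_iSup z using Submodule.iSup_induction' with
    | zero => simp
    | add _ _ _ _ h h' => rw [lie_add, map_add, h, h', map_add, lie_add, lie_add]; abel
    | mem β z hz =>
      rw [hS α y hy, hS β z hz, smul_lie, lie_smul, ← add_smul]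
      exact hS (α + β) _ (LieModule.lie_mem_maxGenEigenspace_toEnd hy hz)

lemma exists_isJordanPair [LieAlgebra.IsKilling K G] (x : G) :
    ∃ s n : G, IsJordanPair K s n ∧ x = s + n ∧ cent K x ≤ cent K s := by
  obtain ⟨N, -, S, hSx, hN, hS, hx⟩ := (LieAlgebra.ad K G x).exists_isNilpotent_isSemisimple
  have hSeigen (α : K) (y : G) (hy : y ∈ (LieAlgebra.ad K G x).maxGenEigenspace α) :
      S y = α • y := by
    rw [Module.End.maxGenEigenspace_eq] at hy
    exact Module.End.apply_eq_of_mem_of_comm_of_isFinitelySemisimple_of_isNil hy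
      (Algebra.commute_of_mem_adjoin_self hSx) hS.isFinitelySemisimple
      (by rwa [← eq_sub_of_add_eq hx.symm])
  let S' : LieDerivation K G G :=
    { S with
      leibniz' y z := by
        rw [← lie_skew z, sub_neg_eq_add, add_comm]
        exact apply_lie_of_forall_mem_maxGenEigenspace hSeigen y z }
  obtain ⟨s, hs⟩ := LieDerivation.IsKilling.exists_eq_ad S'
  have hsS : LieAlgebra.ad K G s = S := by
    rw [← LieDerivation.coe_ad_apply_eq_ad_apply s, hs]
  have hcent : cent K x ≤ cent K s := by
    intro c hc
    rw [cent, LinearMap.mem_ker, hsS, hSeigen 0 c, zero_smul]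
    exact (Module.End.mem_maxGenEigenspace _ _ _).mpr ⟨1, by simpa using mem_cent.mp hc⟩
  refine ⟨s, x - s, ⟨hsS ▸ hS, ?_, ?_⟩, by abel, hcent⟩
  · rwa [map_sub, hsS, hx, add_sub_cancel_right]
  · exact sub_mem (hcent (self_mem_cent x)) (self_mem_cent s)

end JordanDecomposition

section NilpotentPart

lemma pow_succ_mul_eq_of_lie_lie_eq {A : Type*} [Ring A] {e f : A} (h : ⁅⁅e, f⁆, e⁆ = 2 • e)
    (i : ℕ) :
    e ^ (i + 1) * f = f * e ^ (i + 1) + (i + 1) • (⁅e, f⁆ * e ^ i - i • e ^ i) := by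
  induction i with
  | zero => simp [Ring.lie_def]
  | succ i ih =>
    have hef : e * f = f * e + ⁅e, f⁆ := by simp [Ring.lie_def]
    have heh : e * ⁅e, f⁆ = ⁅e, f⁆ * e - 2 • e := by rw [← h, Ring.lie_def ⁅e, f⁆]; abel
    calc e ^ (i + 2) * f = e * (e ^ (i + 1) * f) := by rw [pow_succ' e (i + 1), mul_assoc]
      _ = e * f * e ^ (i + 1) + (i + 1) • (e * ⁅e, f⁆ * e ^ i - i • e ^ (i + 1)) := by
        rw [ih, mul_add, mul_smul_comm, mul_sub, mul_smul_comm, ← pow_succ', mul_assoc, mul_assoc]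
      _ = _ := by
        rw [hef, heh, add_mul, sub_mul, mul_assoc f, mul_assoc _ e, smul_mul_assoc, ← pow_succ',
          ← pow_succ']
        module

variable {K V : Type*} [Field K] [CharZero K] [AddCommGroup V] [Module K V]

lemma exists_eq_natCast_of_apply_lie_eq_smul {e f : Module.End K V} (he : IsNilpotent e)
    (h : ⁅⁅e, f⁆, e⁆ = 2 • e) {v : V} {μ : K} (hv : v ≠ 0) (hev : e v = 0)
    (hμ : ⁅e, f⁆ v = μ • v) : ∃ i : ℕ, μ = i := by
  by_contra! hμ_ne
  suffices mem_range : ∀ i, v ∈ LinearMap.range (e ^ i) by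
    obtain ⟨p, hp⟩ := he
    exact hv (by simpa [hp] using mem_range p)
  intro i
  induction i with
  | zero => exact ⟨v, rfl⟩
  | succ i ih =>
    obtain ⟨w, hw⟩ := ih
    have hpow : (e ^ (i + 1)) w = 0 := by rw [pow_succ', Module.End.mul_apply, hw, hev]
    have hfw : (e ^ (i + 1)) (f w) = ((i + 1 : ℕ) * (μ - i) : K) • v := by
      have := LinearMap.congr_fun (pow_succ_mul_eq_of_lie_lie_eq h i) w
      simp only [Module.End.mul_apply, LinearMap.add_apply, LinearMap.sub_apply,
        LinearMap.smul_apply, hw, hpow, map_zero, zero_add, hμ] at this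
      rw [this]
      module
    have hne : ((i + 1 : ℕ) * (μ - i) : K) ≠ 0 :=
      mul_ne_zero (Nat.cast_ne_zero.mpr i.succ_ne_zero) (sub_ne_zero.mpr (hμ_ne i))
    rw [← Submodule.smul_mem_iff _ hne, ← hfw]
    exact ⟨f w, rfl⟩

variable {G : Type*} [LieRing G] [LieAlgebra K G] [FiniteDimensional K G] {s n : G}

lemma IsJordanPair.exists_smul_add_lie_eq (hsn : IsJordanPair K s n) {y : G}
    (hy : y ∈ cent K s) (hny : ⁅⁅n, y⁆, n⁆ = (2 : K) • n) {c : G} (hc : c ∈ cent K s ⊓ cent K n) :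
    ∃ d ∈ cent K s ⊓ cent K n, (2 : K) • d + ⁅⁅n, y⁆, d⁆ = c := by
  let T : Module.End K G := (2 : K) • 1 + LieAlgebra.ad K G ⁅n, y⁆
  have hT : ∀ d ∈ cent K s ⊓ cent K n, T d ∈ cent K s ⊓ cent K n := by
    rintro d ⟨hds, hdn⟩
    refine ⟨add_mem (Submodule.smul_mem _ _ hds) ?_, add_mem (Submodule.smul_mem _ _ hdn) ?_⟩
    · exact lie_mem_cent (lie_mem_cent hsn.right_mem_cent hy) hds
    change ⁅n, ⁅⁅n, y⁆, d⁆⁆ = 0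
    rw [leibniz_lie, ← lie_skew n ⁅n, y⁆, hny, mem_cent.mp hdn, lie_zero,
      add_zero, neg_lie, smul_lie, mem_cent.mp hdn, smul_zero, neg_zero]
  have hinj : Function.Injective (T.restrict hT) := by
    rw [← LinearMap.ker_eq_bot, LinearMap.ker_eq_bot']
    rintro ⟨d, hd⟩ hTd
    have hTd : (2 : K) • d + ⁅⁅n, y⁆, d⁆ = 0 := congrArg Subtype.val hTd
    by_contra hne
    obtain ⟨i, hi⟩ := exists_eq_natCast_of_apply_lie_eq_smul hsn.isNilpotent
      (f := LieAlgebra.ad K G y) (μ := -2) (v := d)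
      (by rw [lie_ad_ad, lie_ad_ad, hny, map_smul, ofNat_smul_eq_nsmul])
      (fun h => hne (Subtype.ext h)) hd.2
      (by rw [lie_ad_ad, LieAlgebra.ad_apply, neg_smul, eq_neg_of_add_eq_zero_right hTd])
    exact Nat.cast_ne_zero.mpr (i + 1).succ_ne_zero
      (by push_cast; linear_combination -hi : ((i + 1 + 1 : ℕ) : K) = 0)
  obtain ⟨d, hd⟩ := LinearMap.injective_iff_surjective.mp hinj ⟨c, hc⟩
  exact ⟨d, d.2, congrArg Subtype.val hd⟩

end NilpotentPart

section KillingOnCentralizer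

variable {K G : Type*} [Field K] [LieRing G] [LieAlgebra K G] [FiniteDimensional K G]
  [LieAlgebra.IsKilling K G] {s n : G}

lemma eq_zero_of_mem_cent_of_forall_killingForm_eq_zero
    (hs : (LieAlgebra.ad K G s).IsSemisimple) {w : G} (hw : w ∈ cent K s)
    (h : ∀ c ∈ cent K s, killingForm K G w c = 0) : w = 0 := by
  refine (LieAlgebra.IsKilling.killingForm_nondegenerate K G).1 _ fun v => ?_
  obtain ⟨a, ha, _, ⟨b, rfl⟩, rfl⟩ := Submodule.mem_sup.mp <|
    (isCompl_ker_range_of_isSemisimple hs).sup_eq_top ▸ Submodule.mem_top (x := v)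
  rw [map_add, h a ha, zero_add, LieAlgebra.ad_apply,
    killingForm_lie_eq_zero_of_mem_cent (mem_cent_comm.mp hw)]

lemma exists_mem_cent_apply_eq (hs : (LieAlgebra.ad K G s).IsSemisimple)
    {f f' : Module.End K G} (hf : ∀ c ∈ cent K s, f c ∈ cent K s)
    (hf' : ∀ c ∈ cent K s, f' c ∈ cent K s)
    (hadj : ∀ v w, killingForm K G (f v) w = killingForm K G v (f' w)) {v : G}
    (hv : v ∈ cent K s) (h : ∀ c ∈ cent K s, f' c = 0 → killingForm K G v c = 0) :
    ∃ w ∈ cent K s, f w = v := by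
  let B : LinearMap.BilinForm K (cent K s) := (killingForm K G).restrict (cent K s)
  have hrefl : B.IsRefl := fun v w hvw => (killingForm_comm _ _).trans hvw
  have hleft (v : cent K s) (hv : ∀ w, B v w = 0) : v = 0 :=
    Subtype.ext <| eq_zero_of_mem_cent_of_forall_killingForm_eq_zero hs v.2 fun c hc => hv ⟨c, hc⟩
  have hB : B.Nondegenerate := ⟨hleft, fun v hv => hleft v fun w => hrefl _ _ (hv w)⟩
  obtain ⟨w, hw⟩ := mem_range_of_forall_mem_ker (v := ⟨v, hv⟩) hB hrefl
    (f := f.restrict hf) (f' := f'.restrict hf') (fun v w => hadj v w)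
    (fun c hc => h c c.2 (congrArg Subtype.val hc))
  exact ⟨w, w.2, congrArg Subtype.val hw⟩

lemma exists_mem_cent_lie_eq (hs : (LieAlgebra.ad K G s).IsSemisimple) (hn : n ∈ cent K s) {v : G}
    (hv : v ∈ cent K s) (h : ∀ c ∈ cent K s ⊓ cent K n, killingForm K G v c = 0) :
    ∃ w ∈ cent K s, ⁅n, w⁆ = v :=
  exists_mem_cent_apply_eq hs (f := LieAlgebra.ad K G n) (f' := -LieAlgebra.ad K G n)
    (fun _ hc => lie_mem_cent hn hc) (fun _ hc => neg_mem (lie_mem_cent hn hc))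
    (fun v w => by
      rw [LieAlgebra.ad_apply, killingForm_ad_apply, LinearMap.neg_apply, map_neg,
        LieAlgebra.ad_apply]) hv
    (fun c hc hnc => h c ⟨hc, neg_eq_zero.mp hnc⟩)

variable [CharZero K]

lemma IsJordanPair.exists_mem_cent_lie_lie_eq (hsn : IsJordanPair K s n) :
    ∃ y ∈ cent K s, ⁅⁅n, y⁆, n⁆ = (2 : K) • n := by
  obtain ⟨w, hw, hwn⟩ := exists_mem_cent_apply_eq hsn.isSemisimple
    (f := LieAlgebra.ad K G n ^ 2) (f' := LieAlgebra.ad K G n ^ 2)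
    (fun _ hc => lie_mem_cent hsn.right_mem_cent (lie_mem_cent hsn.right_mem_cent hc))
    (fun _ hc => lie_mem_cent hsn.right_mem_cent (lie_mem_cent hsn.right_mem_cent hc))
    (fun v w => by simp [pow_two, killingForm_ad_apply]) hsn.right_mem_cent
    (fun c _ hc => killingForm_eq_zero_of_isNilpotent hsn.isNilpotent hc)
  refine ⟨(-2 : K) • w, Submodule.smul_mem _ _ hw, ?_⟩
  rw [lie_smul, smul_lie, ← lie_skew, show ⁅n, ⁅n, w⁆⁆ = n from hwn, smul_neg, neg_smul, neg_neg]

end KillingOnCentralizer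

section SemilinearDerivations

variable {R K G : Type*} [CommRing R] [Field K] [LieRing G] [LieAlgebra R G] [LieAlgebra K G]

/-- The derivation `D` of the Lie ring `G` is semilinear over the derivation `δ` of the ground
field. Only the compatibility with the Killing form is recorded. -/
def LiesOver (δ : K →+ K) (D : LieDerivation R G G) : Prop :=
  ∀ a b, δ (killingForm K G a b) = killingForm K G (D a) b + killingForm K G a (D b)

variable {δ : K →+ K} {D : LieDerivation R G G} {s n x : G}

lemma LiesOver.killingForm_add_eq_zero (hD : LiesOver δ D) {a b : G}
    (h : killingForm K G a b = 0) : killingForm K G (D a) b + killingForm K G a (D b) = 0 := by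
  rw [← hD a b, h, map_zero]

lemma LiesOver.add_ad (hD : LiesOver δ D) (w : G) : LiesOver δ (D + LieDerivation.ad R G w) := by
  intro a b
  simp only [LieDerivation.add_apply, LieDerivation.ad_apply_apply, map_add, LinearMap.add_apply,
    killingForm_ad_apply, hD a b]
  ring

lemma apply_mem_cent_of_apply_mem_doubleCent (hDs : D s ∈ doubleCent K s) {c : G}
    (hc : c ∈ cent K s) : D c ∈ cent K s := by
  have := D.apply_lie_eq_sub s c
  rwa [mem_cent.mp hc, map_zero, mem_doubleCent.mp hDs c hc, sub_zero, eq_comm] at this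

variable [FiniteDimensional K G] [LieAlgebra.IsKilling K G]

lemma LiesOver.apply_mem_doubleCent (hD : LiesOver δ D) (hs : (LieAlgebra.ad K G s).IsSemisimple)
    (hDs : D s ∈ cent K s) : D s ∈ doubleCent K s := by
  refine mem_doubleCent.mpr fun b hb => ?_
  refine eq_zero_of_mem_cent_of_forall_killingForm_eq_zero hs (lie_mem_cent hb hDs) fun c hc => ?_
  have hform := hD.killingForm_add_eq_zero (killingForm_lie_eq_zero_of_mem_cent hb c)
  rw [LieDerivation.apply_lie_eq_sub, map_sub, killingForm_lie_eq_zero_of_mem_cent hb,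
    killingForm_lie_eq_zero_of_mem_cent hc, sub_zero, add_zero] at hform
  rw [killingForm_ad_apply, hform, neg_zero]

variable [CharZero K]

lemma LiesOver.exists_lie_eq_apply (hD : LiesOver δ D) (hsn : IsJordanPair K s n)
    (hDs : D s ∈ doubleCent K s) : ∃ w ∈ cent K s, ⁅n, w⁆ = D n := by
  refine exists_mem_cent_lie_eq hsn.isSemisimple hsn.right_mem_cent
    (apply_mem_cent_of_apply_mem_doubleCent hDs hsn.right_mem_cent) fun c hc => ?_
  obtain ⟨y, hy, hny⟩ := hsn.exists_mem_cent_lie_lie_eq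
  obtain ⟨d, hd, rfl⟩ := hsn.exists_smul_add_lie_eq hy hny hc
  have hnd : ⁅n, d⁆ = 0 := hd.2
  have hform := hD.killingForm_add_eq_zero
    (killingForm_eq_zero_of_isNilpotent hsn.isNilpotent (by rw [hnd, lie_zero]) :
      killingForm K G n d = 0)
  have hnDd : ⁅n, D d⁆ = ⁅d, D n⁆ := by
    rw [← sub_eq_zero, ← D.apply_lie_eq_sub, hnd, map_zero]
  have htwice : 2 * killingForm K G n (D d) = killingForm K G (D n) ⁅⁅n, y⁆, d⁆ := by
    calc 2 * killingForm K G n (D d) = killingForm K G ⁅⁅n, y⁆, n⁆ (D d) := by rw [hny]; simp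
      _ = killingForm K G ⁅⁅n, y⁆, d⁆ (D n) := by
        rw [killingForm_lie_apply ⁅n, y⁆, hnDd, killingForm_lie_apply ⁅n, y⁆]
      _ = _ := killingForm_comm _ _
  rw [map_add, map_smul, smul_eq_mul]
  linear_combination 2 * hform - htwice

lemma LiesOver.apply_add_mem (hD : LiesOver δ D) (hsn : IsJordanPair K s n) :
    D (s + n) ∈ doubleCent K s ⊔ LinearMap.range (LieAlgebra.ad K G (s + n)) := by
  obtain ⟨a, ha, _, ⟨b, rfl⟩, hab⟩ := Submodule.mem_sup.mp <|
    (isCompl_ker_range_of_isSemisimple hsn.isSemisimple).sup_eq_top ▸ Submodule.mem_top (x := D s)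
  let D' := D + LieDerivation.ad R G b
  have hD's : D' s = a := by
    rw [LieDerivation.add_apply, LieDerivation.ad_apply_apply, ← hab, LieAlgebra.ad_apply,
      ← lie_skew s b, neg_add_cancel_right]
  have hD'_mem : D' s ∈ doubleCent K s :=
    (hD.add_ad b).apply_mem_doubleCent hsn.isSemisimple (hD's ▸ ha)
  obtain ⟨w, hw, hnw⟩ := (hD.add_ad b).exists_lie_eq_apply hsn hD'_mem
  refine Submodule.mem_sup.mpr ⟨a, hD's ▸ hD'_mem, ⁅s + n, w + b⁆, ⟨w + b, rfl⟩, ?_⟩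
  rw [LieDerivation.add_apply, LieDerivation.ad_apply_apply, ← lie_skew b n] at hnw
  rw [map_add, ← hab, lie_add, add_lie, add_lie, mem_cent.mp hw, hnw, LieAlgebra.ad_apply]
  abel

end SemilinearDerivations

section Minors

variable {K m n : Type*} [Field K] [Fintype n] {r : ℕ}

lemma le_rank_of_det_submatrix_ne_zero {A : Matrix m n K} {e : Fin r → m} {f : Fin r → n}
    (h : (A.submatrix e f).det ≠ 0) : r ≤ A.rank :=
  calc r = (A.submatrix e f).rank := by rw [Matrix.rank_of_det_ne_zero h, Fintype.card_fin]
    _ ≤ A.rank := A.rank_submatrix_le e f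

variable [Finite m]

lemma exists_rank_submatrix_eq (A : Matrix m n K) (hr : r ≤ A.rank) :
    ∃ e : Fin r → m, (A.submatrix e id).rank = r := by
  have := Fintype.ofFinite m
  rw [A.rank_eq_finrank_span_row] at hr
  obtain ⟨f, hf, -, hli⟩ := Submodule.exists_fun_fin_finrank_span_eq K (Set.range A.row)
  choose e he using hf
  have hrow : (A.submatrix (e ∘ Fin.castLE hr) id).row = f ∘ Fin.castLE hr :=
    funext fun i => he (Fin.castLE hr i)
  refine ⟨e ∘ Fin.castLE hr, ?_⟩
  have hli' := hrow ▸ hli.comp (Fin.castLE hr) (Fin.castLE_injective hr)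
  rw [hli'.rank_matrix, Fintype.card_fin]

lemma exists_det_submatrix_ne_zero (A : Matrix m n K) (hr : r ≤ A.rank) :
    ∃ (e : Fin r → m) (f : Fin r → n), (A.submatrix e f).det ≠ 0 := by
  obtain ⟨e, he⟩ := exists_rank_submatrix_eq A hr
  obtain ⟨f, hf⟩ := exists_rank_submatrix_eq (A.submatrix e id).transpose
    (by rw [Matrix.rank_transpose, he])
  have hrank : (A.submatrix e f).rank = r := by rw [← Matrix.rank_transpose]; exact hf
  refine ⟨e, f, fun hdet => ?_⟩
  have hsurj : LinearMap.range (A.submatrix e f).mulVecLin = ⊤ :=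
    Submodule.eq_top_of_finrank_eq (by simpa [Matrix.rank] using hrank)
  obtain ⟨v, hv, hAv⟩ := Matrix.exists_mulVec_eq_zero_iff.mpr hdet
  have hinj := LinearMap.injective_iff_surjective.mpr (LinearMap.range_eq_top.mp hsurj)
  exact hv (hinj (by simpa using hAv))

end Minors

section PolynomialCurves

open Polynomial

variable {K V W A : Type*} [Field K] [AddCommGroup V] [Module K V] [AddCommGroup W] [Module K W]
  [Ring A] [Algebra K A]

/-- The curve `τ ↦ c τ` in the vector space `V` is polynomial in its parameter. This is phrased
through linear functionals, so that no basis has to be chosen. -/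
def IsPolynomialCurve (c : K → V) : Prop :=
  ∀ ℓ : Module.Dual K V, ∃ p : K[X], ∀ τ, ℓ (c τ) = p.eval τ

lemma isPolynomialCurve_line (v w : V) : IsPolynomialCurve fun τ : K => v + τ • w :=
  fun ℓ => ⟨C (ℓ v) + C (ℓ w) * X, fun τ => by simp [mul_comm τ]⟩

namespace IsPolynomialCurve

lemma linearMap_comp {c : K → V} (hc : IsPolynomialCurve c) (T : V →ₗ[K] W) :
    IsPolynomialCurve fun τ => T (c τ) :=
  fun ℓ => hc (ℓ ∘ₗ T)

lemma add {c d : K → V} (hc : IsPolynomialCurve c) (hd : IsPolynomialCurve d) :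
    IsPolynomialCurve fun τ => c τ + d τ := fun ℓ => by
  obtain ⟨p, hp⟩ := hc ℓ
  obtain ⟨q, hq⟩ := hd ℓ
  exact ⟨p + q, by simp [hp, hq]⟩

lemma pi {ι : Type*} [Finite ι] {c : K → ι → V} (hc : ∀ i, IsPolynomialCurve (c · i)) :
    IsPolynomialCurve c := fun ℓ => by
  classical
  have := Fintype.ofFinite ι
  choose p hp using fun i => hc i (ℓ ∘ₗ LinearMap.single K (fun _ => V) i)
  refine ⟨∑ i, p i, fun τ => ?_⟩
  simp only [eval_finsetSum, ← hp, LinearMap.comp_apply, ← map_sum]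
  simp [LinearMap.sum_single_apply]

lemma mul [FiniteDimensional K A] {c d : K → A} (hc : IsPolynomialCurve c)
    (hd : IsPolynomialCurve d) : IsPolynomialCurve fun τ => c τ * d τ := fun ℓ => by
  let b := Module.finBasis K A
  choose p hp using fun i => hc (b.coord i)
  choose q hq using fun i => hd (b.coord i)
  refine ⟨∑ i, ∑ j, p i * q j * C (ℓ (b i * b j)), fun τ => ?_⟩
  change ℓ (c τ * d τ) = _
  conv_lhs => rw [← b.sum_repr (c τ), ← b.sum_repr (d τ)]
  simp only [Finset.sum_mul_sum, map_sum, smul_mul_smul_comm, map_smul, eval_finsetSum, eval_mul,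
    eval_C, ← hp, ← hq, Module.Basis.coord_apply, smul_eq_mul]

lemma aeval [FiniteDimensional K A] {c : K → A} (hc : IsPolynomialCurve c) (P : K[X]) :
    IsPolynomialCurve fun τ => Polynomial.aeval (c τ) P := by
  induction P using Polynomial.induction_on with
  | C a => exact fun ℓ => ⟨C (ℓ (algebraMap K A a)), by simp⟩
  | add P Q hP hQ => simpa only [map_add] using hP.add hQ
  | monomial i a hP =>
    simpa only [pow_succ, ← mul_assoc, map_mul, aeval_X] using hP.mul hc

lemma finite_setOf_finrank_range_lt [FiniteDimensional K V] [FiniteDimensional K W]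
    {c : K → V →ₗ[K] W} (hc : IsPolynomialCurve c) (τ₀ : K) :
    {τ | Module.finrank K (LinearMap.range (c τ)) <
      Module.finrank K (LinearMap.range (c τ₀))}.Finite := by
  let bV := Module.finBasis K V
  let bW := Module.finBasis K W
  have hrank (T : V →ₗ[K] W) : (LinearMap.toMatrix bV bW T).rank =
      Module.finrank K (LinearMap.range T) := by
    rw [Matrix.rank_eq_finrank_range_toLin _ bW bV, Matrix.toLin_toMatrix]
  choose p hp using fun i j => hc (bW.coord i ∘ₗ LinearMap.applyₗ (bV j))
  obtain ⟨e, f, hef⟩ := exists_det_submatrix_ne_zero (LinearMap.toMatrix bV bW (c τ₀)) le_rfl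
  have hminor (τ : K) : ((Matrix.of p).submatrix e f).det.eval τ =
      ((LinearMap.toMatrix bV bW (c τ)).submatrix e f).det := by
    rw [← coe_evalRingHom, RingHom.map_det]
    congr 1
    ext i j
    simp only [RingHom.mapMatrix_apply, Matrix.map_apply, Matrix.submatrix_apply, Matrix.of_apply,
      coe_evalRingHom, ← hp, LinearMap.toMatrix_apply, LinearMap.comp_apply,
      LinearMap.applyₗ_apply_apply, Module.Basis.coord_apply]
  refine (finite_setOfPred_isRoot (p := ((Matrix.of p).submatrix e f).det) ?_).subset ?_
  · exact fun h0 => hef (by rw [← hminor, h0, eval_zero])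
  · intro τ hτ
    by_contra hne
    rw [Set.mem_ofPred_eq, IsRoot.def, hminor] at hne
    have hle := le_rank_of_det_submatrix_ne_zero hne
    rw [hrank, hrank] at hle
    exact hle.not_gt hτ

end IsPolynomialCurve

end PolynomialCurves

section CartanRank

open Polynomial LieAlgebra LieModule

variable {K G : Type*} [Field K] [LieRing G] [LieAlgebra K G]

/-- The functionals `u ↦ tr (P i (ad x) ∘ ad u)`. They vanish on `[x, G]`, so their rank bounds the
dimension of the centralizer of `x` from below. -/
def traceFunctionals {ι : Type*} (P : ι → K[X]) (x : G) : G →ₗ[K] ι → K :=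
  LinearMap.pi fun i =>
    LinearMap.trace K G ∘ₗ LinearMap.mulLeft K (aeval (ad K G x) (P i)) ∘ₗ (ad K G : G →ₗ[K] _)

variable {ι : Type*} {P : ι → K[X]}

lemma range_ad_le_ker_traceFunctionals (x : G) :
    LinearMap.range (ad K G x) ≤ LinearMap.ker (traceFunctionals P x) := by
  rintro _ ⟨w, rfl⟩
  ext i
  have hcomm : Commute (ad K G x) (aeval (ad K G x) (P i)) := by
    simpa only [aeval_X] using (Commute.all X (P i)).map (aeval (ad K G x))
  change LinearMap.trace K G (aeval (ad K G x) (P i) * ad K G ⁅x, w⁆) = 0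
  rw [← lie_ad_ad, Ring.lie_def, mul_sub, map_sub, ← mul_assoc, ← mul_assoc,
    LinearMap.trace_mul_comm K _ (ad K G x), ← mul_assoc, hcomm.eq, sub_self]

variable [FiniteDimensional K G]

lemma finrank_range_ad_add_finrank_cent (x : G) :
    Module.finrank K (LinearMap.range (ad K G x)) + Module.finrank K (cent K x) =
      Module.finrank K G :=
  (ad K G x).finrank_range_add_finrank_ker

lemma finrank_range_traceFunctionals_le [Finite ι] (x : G) :
    Module.finrank K (LinearMap.range (traceFunctionals P x)) ≤ Module.finrank K (cent K x) := by
  have hφ := (traceFunctionals P x).finrank_range_add_finrank_ker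
  have had := finrank_range_ad_add_finrank_cent (K := K) x
  have hle := Submodule.finrank_mono (range_ad_le_ker_traceFunctionals (P := P) x)
  omega

lemma isPolynomialCurve_traceFunctionals [Finite ι] (x y : G) :
    IsPolynomialCurve fun τ : K => traceFunctionals P (x + τ • y) := by
  have had := (isPolynomialCurve_line x y).linearMap_comp (ad K G : G →ₗ[K] Module.End K G)
  have hpi : IsPolynomialCurve fun (τ : K) i => LinearMap.trace K G ∘ₗ
      LinearMap.mulLeft K (aeval (ad K G (x + τ • y)) (P i)) ∘ₗ (ad K G : G →ₗ[K] _) :=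
    .pi fun i => (had.aeval (P i)).linearMap_comp <|
      LinearMap.llcomp K _ _ _ (LinearMap.trace K G) ∘ₗ
        LinearMap.lcomp K _ (ad K G : G →ₗ[K] Module.End K G) ∘ₗ LinearMap.mul K (Module.End K G)
  exact hpi.linearMap_comp (LinearEquiv.linearMapPi K).toLinearMap

variable [IsAlgClosed K] [CharZero K]

lemma exists_injective_weight_apply (H : LieSubalgebra K G) [H.IsCartanSubalgebra] :
    ∃ h : H, Function.Injective fun α : Weight K H G => α h := by
  obtain ⟨h, -, hh⟩ := Module.Dual.exists_forall_mem_ne_zero_of_forall_exists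
    (⊤ : Submodule K H) (fun p : {p : Weight K H G × Weight K H G // p.1 ≠ p.2} =>
      Weight.toLinear K H G p.1.1 - Weight.toLinear K H G p.1.2) (by
    rintro ⟨⟨α, β⟩, hαβ⟩
    by_contra! hzero
    refine hαβ (Weight.ext fun u => ?_)
    simpa [sub_eq_zero] using hzero u trivial)
  refine ⟨h, fun α β hαβ => by_contra fun hne => hh ⟨(α, β), hne⟩ ?_⟩
  simpa [sub_eq_zero] using hαβ

variable [IsKilling K G]

lemma exists_forall_exists_aeval_ad_eq (H : LieSubalgebra K G) [H.IsCartanSubalgebra] :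
    ∃ h : H, ∀ v : H, ∃ P : K[X], aeval (ad K G h) P = ad K G v := by
  classical
  obtain ⟨h, hinj⟩ := exists_injective_weight_apply (K := K) H
  refine ⟨h, fun v => ⟨Lagrange.interpolate Finset.univ (fun α : Weight K H G => α h)
    (fun α => α v), ?_⟩⟩
  ext w
  have hw : w ∈ ⨆ α : Weight K H G, genWeightSpace G α := by
    rw [iSup_genWeightSpace_eq_top']; trivial
  induction hw using LieSubmodule.iSup_induction' with
  | zero => simp
  | add _ _ _ _ h₁ h₂ => rw [map_add, map_add, h₁, h₂]
  | mem α w hw =>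
    rcases eq_or_ne w 0 with rfl | hw0
    · simp
    have hhw : ad K G h w = α h • w := IsKilling.lie_eq_smul_of_mem_rootSpace hw h
    have hvw : ad K G v w = α v • w := IsKilling.lie_eq_smul_of_mem_rootSpace hw v
    rw [hvw, Module.End.aeval_apply_of_hasEigenvector
      ⟨Module.End.mem_eigenspace_iff.mpr hhw, hw0⟩,
      Lagrange.eval_interpolate_at_node _ hinj.injOn (Finset.mem_univ α)]

-- The inequality holds for a generic point of the line through `a` and a regular element of `H`,
-- and centralizers only grow under specialization.
lemma finrank_cartan_le_finrank_cent (H : LieSubalgebra K G) [H.IsCartanSubalgebra] (a : G) :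
    Module.finrank K H ≤ Module.finrank K (cent K a) := by
  obtain ⟨h, hh⟩ := exists_forall_exists_aeval_ad_eq (K := K) H
  let v := Module.finBasis K H
  choose P hP using fun i => hh (v i)
  have hsurj : LinearMap.range (traceFunctionals P (h : G)) = ⊤ := by
    refine LinearMap.range_eq_top.mpr fun w => ?_
    have hnondeg := IsKilling.traceForm_cartan_nondegenerate K G H
    refine ⟨(traceForm K H G).toDual hnondeg |>.symm (v.constr K w), funext fun i => ?_⟩
    change LinearMap.trace K G (aeval (ad K G h) (P i) * ad K G _) = _
    rw [hP, LinearMap.trace_mul_comm]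
    exact (LinearMap.BilinForm.apply_toDual_symm_apply (B := traceForm K H G) ..).trans
      (v.constr_basis K w i)
  have had := (isPolynomialCurve_line (K := K) a (h - a)).linearMap_comp
    (ad K G : G →ₗ[K] Module.End K G)
  obtain ⟨τ, hτ⟩ := ((isPolynomialCurve_traceFunctionals (P := P) a (h - a)
    |>.finite_setOf_finrank_range_lt 1).union (had.finite_setOf_finrank_range_lt 0)).exists_notMem
  have hle : Module.finrank K H ≤ Module.finrank K (cent K (a + τ • (h - a))) := by
    have hφ : Module.finrank K (LinearMap.range (traceFunctionals P (a + (1 : K) • (h - a)))) ≤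
        Module.finrank K (LinearMap.range (traceFunctionals P (a + τ • (h - a)))) :=
      not_lt.mp fun hlt => hτ (.inl hlt)
    refine le_trans ?_ (finrank_range_traceFunctionals_le (P := P) _)
    rwa [one_smul, add_sub_cancel, hsurj, finrank_top, Module.finrank_fintype_fun_eq_card,
      Fintype.card_fin] at hφ
  have hrank : Module.finrank K (LinearMap.range (ad K G a)) ≤
      Module.finrank K (LinearMap.range (ad K G (a + τ • (h - a)))) := by
    have had_rank : Module.finrank K _ ≤ _ := not_lt.mp fun hlt => hτ (.inr hlt)
    rwa [zero_smul, add_zero] at had_rank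
  have hτ_cent := finrank_range_ad_add_finrank_cent (K := K) (a + τ • (h - a))
  have ha_cent := finrank_range_ad_add_finrank_cent (K := K) a
  omega

end CartanRank

section CartanInCentralizer

open LieAlgebra

variable {K G : Type*} [Field K] [LieRing G] [LieAlgebra K G]

variable (K) in
/-- The centralizer of `s` as a Lie subalgebra, so that it has Cartan subalgebras of its own. -/
def centSubalgebra (s : G) : LieSubalgebra K G where
  __ := cent K s
  lie_mem' := lie_mem_cent

variable {s : G} {H : LieSubalgebra K (centSubalgebra K s)}

lemma mem_map_incl_iff {c : G} (hc : c ∈ cent K s) :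
    c ∈ H.map (centSubalgebra K s).incl ↔ (⟨c, hc⟩ : centSubalgebra K s) ∈ H := by
  rw [LieSubalgebra.mem_map]
  exact ⟨fun ⟨y, hy, hyc⟩ => by simpa [← hyc] using hy, fun h => ⟨_, h, rfl⟩⟩

lemma map_incl_le_cent (H : LieSubalgebra K (centSubalgebra K s)) :
    (H.map (centSubalgebra K s).incl).toSubmodule ≤ cent K s := by
  rintro _ ⟨y, -, rfl⟩
  exact y.2

lemma doubleCent_le_map_incl (hH : H.normalizer = H) :
    doubleCent K s ≤ (H.map (centSubalgebra K s).incl).toSubmodule := by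
  intro c hc
  refine (mem_map_incl_iff (doubleCent_le_cent s hc)).mpr ?_
  rw [← hH, LieSubalgebra.mem_normalizer_iff']
  intro y _
  have hyc : ⁅y, (⟨c, doubleCent_le_cent s hc⟩ : centSubalgebra K s)⁆ = 0 :=
    Subtype.ext (mem_doubleCent.mp hc y y.2)
  exact hyc ▸ zero_mem H

lemma cent_le_of_doubleCent_eq {H : LieSubalgebra K G} [H.IsCartanSubalgebra]
    (h : doubleCent K s = H.toSubmodule) : cent K s ≤ H.toSubmodule := by
  intro v hv
  rw [LieSubalgebra.mem_toSubmodule,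
    ← LieSubalgebra.IsCartanSubalgebra.self_normalizing (H := H), LieSubalgebra.mem_normalizer_iff]
  intro y hy
  have hvy := mem_doubleCent.mp (h ▸ hy : y ∈ doubleCent K s) v hv
  exact hvy ▸ zero_mem H

variable [FiniteDimensional K G]

lemma isCompl_cent_range_ad (hs : (ad K G s).IsSemisimple) :
    IsCompl (cent K s) (LinearMap.range (ad K G s)) :=
  isCompl_ker_range_of_isSemisimple hs

lemma normalizer_map_incl (hs : (ad K G s).IsSemisimple) (hH : H.normalizer = H) :
    (H.map (centSubalgebra K s).incl).normalizer = H.map (centSubalgebra K s).incl := by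
  refine le_antisymm (fun v hv => ?_) (LieSubalgebra.le_normalizer _)
  rw [LieSubalgebra.mem_normalizer_iff'] at hv
  have hvs : v ∈ cent K s := by
    have hsv : ad K G s v ∈ cent K s :=
      map_incl_le_cent H (hv s (doubleCent_le_map_incl hH (self_mem_doubleCent s)))
    exact (isCompl_cent_range_ad hs).disjoint.le_bot ⟨hsv, v, rfl⟩
  rw [mem_map_incl_iff hvs, ← hH, LieSubalgebra.mem_normalizer_iff']
  exact fun y hy => (mem_map_incl_iff (lie_mem_cent y.2 hvs)).mp <|
    hv y ((mem_map_incl_iff y.2).mpr hy)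

lemma exists_isCartanSubalgebra_doubleCent_le [Infinite K] (hs : (ad K G s).IsSemisimple) :
    ∃ H : LieSubalgebra K G, H.IsCartanSubalgebra ∧ doubleCent K s ≤ H.toSubmodule := by
  obtain ⟨x, hx⟩ := exists_isCartanSubalgebra_engel K (centSubalgebra K s)
  refine ⟨(LieSubalgebra.engel K x).map (centSubalgebra K s).incl, ⟨?_, ?_⟩, ?_⟩
  · exact (LieEquiv.nilpotent_iff_equiv_nilpotent
      (LieSubalgebra.equivMapOfInjective _ _ Subtype.val_injective)).mp hx.nilpotent
  · exact normalizer_map_incl hs hx.self_normalizing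
  · exact doubleCent_le_map_incl hx.self_normalizing

end CartanInCentralizer

section RootsVanishingAtElement

open LieAlgebra LieModule Module

variable {K V : Type*} [Field K] [AddCommGroup V] [Module K V] [FiniteDimensional K V]

lemma exists_eq_smul_of_le_ker {W : Submodule K V} (hW : finrank K V ≤ finrank K W + 1)
    {f f' : Dual K V} (hf : W ≤ LinearMap.ker f) (hf' : W ≤ LinearMap.ker f') (hf0 : f ≠ 0) :
    ∃ a : K, f' = a • f := by
  have hker : W = LinearMap.ker f := Submodule.eq_of_le_of_finrank_le hf <| by
    rwa [← Nat.add_le_add_iff_right (n := 1), Dual.finrank_ker_add_one_of_ne_zero hf0]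
  have hspan := mem_span_of_iInf_ker_le_ker (L := fun _ : Unit => f) (K := f')
    ((iInf_const (a := LinearMap.ker f)).le.trans (hker ▸ hf'))
  rw [Set.range_const, Submodule.mem_span_singleton] at hspan
  exact hspan.imp fun _ ha => ha.symm

variable {G : Type*} [LieRing G] [LieAlgebra K G] [FiniteDimensional K G]
  {H : LieSubalgebra K G} [H.IsCartanSubalgebra]

lemma genWeightSpace_toSubmodule_of_isZero {β : Weight K H G} (hβ : β.IsZero) :
    (genWeightSpace G β).toSubmodule = H.toSubmodule := by
  rw [hβ.eq]
  exact congrArg LieSubmodule.toSubmodule (rootSpace_zero_eq K G H)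

variable [IsKilling K G] [IsAlgClosed K] [CharZero K]

lemma cent_le_iSup_genWeightSpace (s : H) :
    cent K (s : G) ≤ ⨆ β : {β : Weight K H G // β s = 0}, (genWeightSpace G β.1).toSubmodule := by
  set W := ⨆ β : {β : Weight K H G // β s = 0}, (genWeightSpace G β.1).toSubmodule
  have hlie (β : Weight K H G) {v : G} (hv : v ∈ genWeightSpace G β) : ⁅(s : G), v⁆ = β s • v :=
    IsKilling.lie_eq_smul_of_mem_rootSpace hv s
  have hle : W ≤ cent K (s : G) := iSup_le fun β v hv =>
    mem_cent.mpr (by rw [hlie _ hv, β.2, zero_smul])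
  have htop : W ⊔ LinearMap.range (ad K G s) = ⊤ := by
    rw [eq_top_iff, ← LieSubmodule.top_toSubmodule (R := K) (L := H),
      ← iSup_genWeightSpace_eq_top' K H G, LieSubmodule.iSup_toSubmodule]
    refine iSup_le fun β v hv => ?_
    by_cases hβ : β s = 0
    · exact Submodule.mem_sup_left (Submodule.mem_iSup_of_mem ⟨β, hβ⟩ hv)
    · refine Submodule.mem_sup_right ⟨(β s)⁻¹ • v, ?_⟩
      rw [map_smul, ad_apply, hlie _ hv, inv_smul_smul₀ hβ]
  have hcompl := isCompl_cent_range_ad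
    (IsKilling.isSemisimple_ad_of_mem_isCartanSubalgebra (K := K) s.2)
  calc cent K (s : G) = (W ⊔ LinearMap.range (ad K G s)) ⊓ cent K (s : G) := by
        rw [htop, top_inf_eq]
    _ = W ⊔ LinearMap.range (ad K G s) ⊓ cent K (s : G) := sup_inf_assoc_of_le _ hle
    _ ≤ W := by rw [hcompl.symm.inf_eq_bot, sup_bot_eq]

lemma cent_le_of_forall_isZero {s : H} (h : ∀ β : Weight K H G, β s = 0 → β.IsZero) :
    cent K (s : G) ≤ H.toSubmodule :=
  (cent_le_iSup_genWeightSpace s).trans <| iSup_le fun β =>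
    (genWeightSpace_toSubmodule_of_isZero (h β.1 β.2)).le

variable (K H) in
lemma exists_cent_le : ∃ a : G, cent K a ≤ H.toSubmodule := by
  obtain ⟨s, hs⟩ := Module.Dual.exists_forall_ne_zero_of_forall_exists
    (fun β : {β : Weight K H G // β.IsNonZero} => Weight.toLinear K H G β.1) (by
      rintro ⟨β, hβ⟩
      by_contra! hzero
      exact hβ (by simpa using (LinearMap.ext hzero : Weight.toLinear K H G β = 0)))
  exact ⟨s, cent_le_of_forall_isZero fun β hβ => by_contra fun h => hs ⟨β, h⟩ hβ⟩

lemma comap_doubleCent_le_ker_toLinear {s : H} {β : Weight K H G} (hβ : β s = 0) :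
    (doubleCent K (s : G)).comap H.toSubmodule.subtype ≤
      LinearMap.ker (Weight.toLinear K H G β) := by
  intro c hc
  obtain ⟨w, hw, hw0⟩ := β.exists_ne_zero
  have hsw : ⁅(s : G), w⁆ = β s • w := IsKilling.lie_eq_smul_of_mem_rootSpace hw s
  have hcw : ⁅(c : G), w⁆ = β c • w := IsKilling.lie_eq_smul_of_mem_rootSpace hw c
  rw [hβ, zero_smul] at hsw
  have hcw0 : ⁅(c : G), w⁆ = 0 := mem_cent_comm (K := K).mp (mem_doubleCent.mp hc w hsw)
  exact (smul_eq_zero.mp (hcw.symm.trans hcw0)).resolve_right hw0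

lemma cent_le_sup_rootSpace {s : H} (hz : doubleCent K (s : G) ≤ H.toSubmodule)
    (hdim : finrank K H ≤ finrank K (doubleCent K (s : G)) + 1) {α : Weight K H G} (hα : α s = 0)
    (hα0 : α.IsNonZero) :
    cent K (s : G) ≤
      H.toSubmodule ⊔ (rootSpace H α).toSubmodule ⊔ (rootSpace H (-α)).toSubmodule := by
  refine (cent_le_iSup_genWeightSpace s).trans (iSup_le fun ⟨β, hβ⟩ => ?_)
  by_cases hβ0 : β.IsZero
  · exact (genWeightSpace_toSubmodule_of_isZero hβ0).le.trans (le_sup_of_le_left le_sup_left)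
  rw [← (Submodule.comapSubtypeEquivOfLe hz).finrank_eq] at hdim
  obtain ⟨a, ha⟩ := exists_eq_smul_of_le_ker hdim (comap_doubleCent_le_ker_toLinear hα)
    (comap_doubleCent_le_ker_toLinear hβ) (fun h0 => hα0 (by simpa using h0))
  have hprop : (β : H → K) = a • (α : H → K) := funext fun u => LinearMap.congr_fun ha u
  rcases IsKilling.eq_neg_or_eq_of_eq_smul α β hβ0 a hprop with rfl | rfl
  · exact le_sup_right
  · exact le_sup_of_le_left le_sup_right

lemma finrank_doubleCent_add_two_le_or_finrank_cent_le {s : G}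
    (hz : doubleCent K s ≤ H.toSubmodule) :
    finrank K (doubleCent K s) + 2 ≤ finrank K H ∨ finrank K (cent K s) ≤ finrank K H + 2 := by
  refine or_iff_not_imp_left.mpr fun hdim => ?_
  lift s to H using hz (self_mem_doubleCent s)
  by_cases h : ∀ β : Weight K H G, β s = 0 → β.IsZero
  · exact (Submodule.finrank_mono (cent_le_of_forall_isZero h)).trans (Nat.le_add_right _ 2)
  push Not at h
  obtain ⟨α, hα, hα0⟩ := h
  calc finrank K (cent K (s : G))
      ≤ finrank K (H.toSubmodule ⊔ (rootSpace H α).toSubmodule ⊔ (rootSpace H (-α)).toSubmodule :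
          Submodule K G) :=
        Submodule.finrank_mono (cent_le_sup_rootSpace hz (by omega) hα hα0)
    _ ≤ finrank K H.toSubmodule + finrank K (rootSpace H α).toSubmodule
          + finrank K (rootSpace H (-α)).toSubmodule :=
        (Submodule.finrank_add_le_finrank_add_finrank _ _).trans <|
          Nat.add_le_add_right (Submodule.finrank_add_le_finrank_add_finrank _ _) _
    _ = finrank K H + 1 + 1 := by
        congr 1
        · exact congrArg _ (IsKilling.finrank_rootSpace_eq_one α hα0)
        · exact IsKilling.finrank_rootSpace_eq_one (-α) (by simpa using hα0)

end RootsVanishingAtElement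

section LinearAlgebraBounds

open Module

variable {K V W : Type*} [Field K] [AddCommGroup V] [Module K V] [FiniteDimensional K V]
  [AddCommGroup W] [Module K W] [FiniteDimensional K W]

lemma finrank_le_of_forall_fst_mem {T : Submodule K (V × W)} {V' : Submodule K V}
    {W' : Submodule K W} (hV : ∀ p ∈ T, p.1 ∈ V') (hW : ∀ w, ((0 : V), w) ∈ T → w ∈ W') :
    finrank K T ≤ finrank K V' + finrank K W' := by
  let f : T →ₗ[K] V := LinearMap.fst K V W ∘ₗ T.subtype
  let i : LinearMap.ker f →ₗ[K] W := LinearMap.snd K V W ∘ₗ T.subtype ∘ₗ (LinearMap.ker f).subtype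
  have hi : Function.Injective i := fun p q hpq =>
    Subtype.ext <| Subtype.ext <| Prod.ext (p.2.trans q.2.symm) hpq
  have hker : finrank K (LinearMap.ker f) ≤ finrank K W' := by
    rw [← LinearMap.finrank_range_of_inj hi]
    refine Submodule.finrank_mono ?_
    rintro _ ⟨⟨⟨⟨v, w⟩, hp⟩, hv : v = 0⟩, rfl⟩
    exact hW w (hv ▸ hp)
  have hrange : finrank K (LinearMap.range f) ≤ finrank K V' :=
    Submodule.finrank_mono (by rintro _ ⟨p, rfl⟩; exact hV p p.2)
  rw [← LinearMap.finrank_range_add_finrank_ker f]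
  exact Nat.add_le_add hrange hker

lemma two_le_finrank_range_of_isAlt {B : LinearMap.BilinForm K V} (hB : B.IsAlt) (hB0 : B ≠ 0) :
    2 ≤ finrank K (LinearMap.range B) := by
  obtain ⟨a, b, hab⟩ : ∃ a b, B a b ≠ 0 := by
    by_contra! h
    exact hB0 (LinearMap.ext₂ h)
  have hli : LinearIndependent K ![B a, B b] := by
    refine LinearIndependent.pair_iff.mpr fun p q hpq => ⟨?_, ?_⟩
    · simpa [hB b, hab] using LinearMap.congr_fun hpq b
    · simpa [hB a, ← hB.neg_eq a b, hab] using LinearMap.congr_fun hpq a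
  calc 2 = finrank K (Submodule.span K (Set.range ![B a, B b])) := by
        rw [finrank_span_eq_card hli, Fintype.card_fin]
    _ ≤ finrank K (LinearMap.range B) := Submodule.finrank_mono <| Submodule.span_le.mpr <| by
        rintro _ ⟨i, rfl⟩
        fin_cases i <;> exact LinearMap.mem_range_self B _

end LinearAlgebraBounds

section TangentBound

open LieAlgebra Module

variable {R K G : Type*} [CommRing R] [Field K] [LieRing G] [LieAlgebra R G] [LieAlgebra K G]
  {s n x y : G}

lemma apply_mem_cent_of_apply_eq_zero {D : LieDerivation R G G} (hDx : D x = 0)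
    (hy : y ∈ cent K x) : D y ∈ cent K x := by
  have := D.apply_lie_eq_add x y
  rwa [mem_cent.mp hy, map_zero, hDx, zero_lie, add_zero, eq_comm] at this

lemma apply_mem_doubleCent_of_apply_eq_zero {D : LieDerivation R G G} (hDx : D x = 0)
    (hcent : cent K x = cent K s) (hy : y ∈ doubleCent K s) : D y ∈ doubleCent K s := by
  refine mem_doubleCent.mpr fun d hd => ?_
  have hDd : D d ∈ cent K s := hcent ▸ apply_mem_cent_of_apply_eq_zero hDx (hcent ▸ hd)
  have := D.apply_lie_eq_add d y
  rwa [mem_doubleCent.mp hy d hd, mem_doubleCent.mp hy _ hDd, map_zero, add_zero, eq_comm] at this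

variable (R K) in
/-- The values at `(x, y)` of the semilinear derivations of `G`. When `(x, y)` is the generic point
of a subvariety, these are its tangent vectors. -/
def derivationVectors (x y : G) : Set (G × G) :=
  {p | ∃ (δ : K →+ K) (D : LieDerivation R G G), LiesOver δ D ∧ p = (D x, D y)}

variable [FiniteDimensional K G] [IsKilling K G]

lemma finrank_cent_inf_cent_add_two_le (hs : (ad K G s).IsSemisimple)
    (hx : x ∈ cent K s) (hxs : x ∉ doubleCent K s) :
    finrank K ↥(cent K s ⊓ cent K x) + 2 ≤ finrank K (cent K s) := by
  let B : LinearMap.BilinForm K (cent K s) :=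
    (killingForm K G ∘ₗ ad K G x).domRestrict₁₂ (cent K s) (cent K s)
  have hB (a b : cent K s) : B a b = killingForm K G ⁅x, (a : G)⁆ b := rfl
  have hker (a : cent K s) : B a = 0 ↔ ⁅x, (a : G)⁆ = 0 := by
    refine ⟨fun h => ?_, fun h => LinearMap.ext fun b => by simp [hB, h]⟩
    exact eq_zero_of_mem_cent_of_forall_killingForm_eq_zero hs (lie_mem_cent hx a.2) fun c hc =>
      LinearMap.congr_fun h ⟨c, hc⟩
  have hB_alt : B.IsAlt := fun a => by
    rw [hB, killingForm_lie_apply, lie_self, map_zero]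
  have hB0 : B ≠ 0 := by
    intro h0
    refine hxs (mem_doubleCent.mpr fun d hd => ?_)
    exact mem_cent_comm (K := K).mp ((hker ⟨d, hd⟩).mp (by rw [h0, LinearMap.zero_apply]))
  have hmap : (LinearMap.ker B).map (cent K s).subtype = cent K s ⊓ cent K x := by
    rw [show LinearMap.ker B = (cent K x).comap (cent K s).subtype from Submodule.ext hker,
      Submodule.map_comap_subtype]
  rw [← hmap, Submodule.finrank_map_subtype_eq, ← LinearMap.finrank_range_add_finrank_ker B,
    add_comm]
  exact Nat.add_le_add_right (two_le_finrank_range_of_isAlt hB_alt hB0) _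

lemma mem_doubleCent_of_finrank_cent_le (hs : (ad K G s).IsSemisimple) (hx : x ∈ cent K s)
    {W : Submodule K G} (hW : W ≤ cent K s ⊓ cent K x)
    (h : finrank K (cent K s) ≤ finrank K W + 1) : x ∈ doubleCent K s := by
  by_contra hxs
  have := finrank_cent_inf_cent_add_two_le hs hx hxs
  have := Submodule.finrank_mono hW
  omega

variable [CharZero K] {T : Submodule K (G × G)}

lemma fst_mem_of_mem_derivationVectors (hsn : IsJordanPair K s n) {p : G × G}
    (hp : p ∈ derivationVectors R K (s + n) y) :
    p.1 ∈ doubleCent K s ⊔ LinearMap.range (ad K G (s + n)) := by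
  obtain ⟨δ, D, hD, rfl⟩ := hp
  exact hD.apply_add_mem hsn

lemma finrank_le_finrank_doubleCent_add (hsn : IsJordanPair K s n) (hy : y ∈ cent K (s + n))
    (hT : (T : Set (G × G)) ⊆ derivationVectors R K (s + n) y) :
    finrank K T ≤ finrank K (doubleCent K s) + finrank K G := by
  have hbound := finrank_le_of_forall_fst_mem (W' := cent K (s + n))
    (fun p hp => fst_mem_of_mem_derivationVectors hsn (hT hp)) fun v hv => by
      obtain ⟨δ, D, -, hDv⟩ := hT hv
      obtain ⟨hDx, rfl⟩ := Prod.ext_iff.mp hDv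
      exact apply_mem_cent_of_apply_eq_zero hDx.symm hy
  have := Submodule.finrank_add_le_finrank_add_finrank (doubleCent K s)
    (LinearMap.range (ad K G (s + n)))
  have := finrank_range_ad_add_finrank_cent (K := K) (s + n)
  omega

lemma finrank_add_finrank_cent_le (hsn : IsJordanPair K s n) (hcent : cent K (s + n) = cent K s)
    (hy : y ∈ doubleCent K s) (hT : (T : Set (G × G)) ⊆ derivationVectors R K (s + n) y) :
    finrank K T + finrank K (cent K s) ≤ 2 * finrank K (doubleCent K s) + finrank K G := by
  have hbound := finrank_le_of_forall_fst_mem (W' := doubleCent K s)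
    (fun p hp => fst_mem_of_mem_derivationVectors hsn (hT hp)) fun v hv => by
      obtain ⟨δ, D, -, hDv⟩ := hT hv
      obtain ⟨hDx, rfl⟩ := Prod.ext_iff.mp hDv
      exact apply_mem_doubleCent_of_apply_eq_zero hDx.symm hcent hy
  have := Submodule.finrank_add_le_finrank_add_finrank (doubleCent K s)
    (LinearMap.range (ad K G (s + n)))
  have := finrank_range_ad_add_finrank_cent (K := K) (s + n)
  rw [hcent] at this
  omega

variable [IsAlgClosed K]

theorem finrank_add_two_le_of_subset_derivationVectors {a : G} {r : ℕ} (hxy : ⁅x, y⁆ = 0)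
    (ha : finrank K (cent K a) ≤ r) (hr : r < finrank K ↥(cent K x ⊓ cent K y))
    (hT : (T : Set (G × G)) ⊆ derivationVectors R K x y) :
    finrank K T + 2 ≤ finrank K G + r := by
  obtain ⟨s, n, hsn, rfl, hle⟩ := exists_isJordanPair (K := K) x
  obtain ⟨H, hH, hz⟩ := exists_isCartanSubalgebra_doubleCent_le hsn.isSemisimple
  have hHr : finrank K H ≤ r := (finrank_cartan_le_finrank_cent H a).trans ha
  have hm : finrank K ↥(cent K (s + n) ⊓ cent K y) ≤ finrank K (cent K s) :=
    Submodule.finrank_mono (inf_le_left.trans hle)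
  rcases finrank_doubleCent_add_two_le_or_finrank_cent_le hz with hsmall | hlarge
  · have := finrank_le_finrank_doubleCent_add hsn hxy hT
    omega
  · have hx : s + n ∈ doubleCent K s := mem_doubleCent_of_finrank_cent_le hsn.isSemisimple
      (hle (self_mem_cent _)) (le_inf (inf_le_left.trans hle) inf_le_left)
      (by omega : finrank K (cent K s) ≤ finrank K ↥(cent K (s + n) ⊓ cent K y) + 1)
    have hcent : cent K (s + n) = cent K s :=
      le_antisymm hle fun d hd => mem_cent_comm.mp (mem_doubleCent.mp hx d hd)
    have hy : y ∈ doubleCent K s := mem_doubleCent_of_finrank_cent_le hsn.isSemisimple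
      (hle hxy) (inf_le_inf_right _ hle) (by omega)
    have hzH : finrank K (doubleCent K s) < finrank K H := by
      refine (Submodule.finrank_mono hz).lt_of_ne fun heq => ?_
      have : finrank K (cent K s) ≤ finrank K H := Submodule.finrank_mono
        (cent_le_of_doubleCent_eq (Submodule.eq_of_le_of_finrank_eq hz heq))
      omega
    have := finrank_add_finrank_cent_le hsn hcent hy hT
    omega

end TangentBound

section DimensionByDerivations

open Module TensorProduct

lemma exists_derivation_extending_of_formallyEtale {F S L : Type*} [CommRing F] [CommRing S]
    [CommRing L] [Algebra F S] [Algebra S L] [Algebra F L] [IsScalarTower F S L]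
    [Algebra.FormallyEtale S L] (d : Derivation F S L) :
    ∃ D : Derivation F L L, ∀ s, D (algebraMap S L s) = d s := by
  let e := KaehlerDifferential.tensorKaehlerEquivOfFormallyEtale F S L
  let l : L ⊗[S] Ω[S⁄F] →ₗ[L] L := LinearMap.liftBaseChange L d.liftKaehlerDifferential
  refine ⟨(l.comp e.symm.toLinearMap).compDer (KaehlerDifferential.D F L), fun s => ?_⟩
  change l (e.symm (KaehlerDifferential.D F L (algebraMap S L s))) = d s
  rw [KaehlerDifferential.tensorKaehlerEquivOfFormallyEtale_symm_D_algebraMap]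
  simp [l]

lemma formallyEtale_of_isAlgebraic {S L : Type*} [CommRing S] [IsDomain S] [CharZero S] [Field L]
    [Algebra S L] [FaithfulSMul S L] [Algebra.IsAlgebraic S L] : Algebra.FormallyEtale S L := by
  let := FractionRing.liftAlgebra S L
  have hinj := IsFractionRing.injective S (FractionRing S)
  have : Algebra.IsAlgebraic (FractionRing S) L := Algebra.IsAlgebraic.extendScalars (R := S) hinj
  have : CharZero (FractionRing S) := charZero_of_injective_algebraMap hinj
  have : Algebra.FormallyEtale (FractionRing S) L := Algebra.FormallyEtale.of_isSeparable _ _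
  have : Algebra.FormallyEtale S (FractionRing S) :=
    Algebra.FormallyEtale.of_isLocalization (nonZeroDivisors S)
  exact Algebra.FormallyEtale.comp S (FractionRing S) L

lemma ringKrullDim_le_of_isIntegral (P A : Type*) [CommRing P] [CommRing A] [Algebra P A]
    [Algebra.IsIntegral P A] : ringKrullDim A ≤ ringKrullDim P :=
  Order.krullDim_le_of_strictMono (PrimeSpectrum.comap (algebraMap P A))
    fun p _ h => have := p.2; Ideal.IsIntegral.comap_lt_comap h

/-- Evaluation of the derivations of `L` at a family of elements. -/
def evalDerivation (F : Type*) {L ι : Type*} [CommRing F] [CommRing L] [Algebra F L] (ξ : ι → L) :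
    Derivation F L L →ₗ[L] (ι → L) where
  toFun D j := D (ξ j)
  map_add' _ _ := rfl
  map_smul' _ _ := rfl

lemma derivation_algebraMap_eq_zero {F A L ι : Type*} [CommRing F] [CommRing A] [CommRing L]
    [Algebra F A] [Algebra A L] [Algebra F L] [IsScalarTower F A L] {ξ : ι → A}
    (hξ : Algebra.adjoin F (Set.range ξ) = ⊤) {D : Derivation F L L}
    (hD : evalDerivation F (algebraMap A L ∘ ξ) D = 0) (a : A) : D (algebraMap A L a) = 0 := by
  have heq : Set.EqOn (D.compAlgebraMap A) (0 : Derivation F A L) (Set.range ξ) := by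
    rintro _ ⟨j, rfl⟩
    exact congrFun hD j
  exact Derivation.eqOn_adjoin heq (hξ ▸ Algebra.mem_top)

lemma card_le_finrank_range_evalDerivation {F A L ι σ : Type*} [Field F] [CharZero F] [Finite ι]
    [Fintype σ] [CommRing A] [Algebra F A] [Field L] [Algebra A L] [Algebra F L]
    [IsScalarTower F A L] [Algebra (MvPolynomial σ F) A] [Algebra (MvPolynomial σ F) L]
    [IsScalarTower (MvPolynomial σ F) A L] [IsScalarTower F (MvPolynomial σ F) L]
    [FaithfulSMul (MvPolynomial σ F) L] [Algebra.IsAlgebraic (MvPolynomial σ F) L] {ξ : ι → A}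
    (hξ : Algebra.adjoin F (Set.range ξ) = ⊤) :
    Fintype.card σ ≤ finrank L (LinearMap.range (evalDerivation F (algebraMap A L ∘ ξ))) := by
  classical
  have : CharZero (MvPolynomial σ F) := charZero_of_injective_algebraMap (algebraMap F _).injective
  have := formallyEtale_of_isAlgebraic (S := MvPolynomial σ F) (L := L)
  choose D hD using fun i : σ => exists_derivation_extending_of_formallyEtale
    (MvPolynomial.mkDerivation F (Pi.single i (1 : L)))
  suffices LinearIndependent L fun i =>
      (evalDerivation F (algebraMap A L ∘ ξ)).rangeRestrict (D i) from
    this.fintype_card_le_finrank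
  refine Fintype.linearIndependent_iff.mpr fun c hc i => ?_
  have hker : evalDerivation F (algebraMap A L ∘ ξ) (∑ j, c j • D j) = 0 := by
    simpa using congrArg Subtype.val hc
  let t (i : σ) : MvPolynomial σ F := MvPolynomial.X i
  have heval (j : σ) : evalDerivation F (algebraMap _ L ∘ t) (D j) = Pi.single j 1 :=
    funext fun i => (hD j (t i)).trans (MvPolynomial.mkDerivation_X _ _ i)
  have hzero : evalDerivation F (algebraMap _ L ∘ t) (∑ j, c j • D j) i = 0 := by
    have := derivation_algebraMap_eq_zero hξ hker (algebraMap (MvPolynomial σ F) A (t i))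
    rwa [← IsScalarTower.algebraMap_apply] at this
  simpa [heval, Pi.single_apply] using hzero

theorem ringKrullDim_le_finrank_range_evalDerivation {F A L ι : Type*} [Field F] [CharZero F]
    [Finite ι] [CommRing A] [IsDomain A] [Algebra F A] [Field L] [Algebra A L] [Algebra F L]
    [IsScalarTower F A L] [FaithfulSMul A L] [Algebra.IsAlgebraic A L] {ξ : ι → A}
    (hξ : Algebra.adjoin F (Set.range ξ) = ⊤) :
    ringKrullDim A ≤ finrank L (LinearMap.range (evalDerivation F (algebraMap A L ∘ ξ))) := by
  have : Algebra.FiniteType F A := ⟨Subalgebra.fg_def.mpr ⟨_, Set.finite_range ξ, hξ⟩⟩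
  obtain ⟨n, φ, hφ, hint⟩ := exists_integral_inj_algHom_of_fg F A
  let : Algebra (MvPolynomial (Fin n) F) A := φ.toRingHom.toAlgebra
  have : Algebra.IsIntegral (MvPolynomial (Fin n) F) A := ⟨hint⟩
  have : FaithfulSMul (MvPolynomial (Fin n) F) A :=
    (faithfulSMul_iff_algebraMap_injective _ _).mpr hφ
  let : Algebra (MvPolynomial (Fin n) F) L := ((algebraMap A L).comp φ.toRingHom).toAlgebra
  have : IsScalarTower (MvPolynomial (Fin n) F) A L := .of_algebraMap_eq fun _ => rfl
  have : IsScalarTower F (MvPolynomial (Fin n) F) A := .of_algHom φ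
  have : IsScalarTower F (MvPolynomial (Fin n) F) L := .to₁₂₄ F _ A L
  have : FaithfulSMul (MvPolynomial (Fin n) F) L := .trans _ A L
  have : Algebra.IsAlgebraic (MvPolynomial (Fin n) F) L := .trans _ A L
  calc ringKrullDim A ≤ ringKrullDim (MvPolynomial (Fin n) F) := ringKrullDim_le_of_isIntegral _ A
    _ = n := by
      rw [MvPolynomial.ringKrullDim_of_isNoetherianRing, ringKrullDim_eq_zero_of_field, zero_add,
        Nat.card_fin]
    _ ≤ _ := by exact_mod_cast Fintype.card_fin n ▸ card_le_finrank_range_evalDerivation hξ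

end DimensionByDerivations

section ZariskiDimension

open TopologicalSpace Topology

variable (F : Type*) [Field F] (V : Type*) [AddCommGroup V] [Module F V] [FiniteDimensional F V]

/-- The ideal of the polynomial functions, in the coordinates used by `CV.evalP`, which vanish
on `S`. -/
def vanishingIdeal (S : Set V) : Ideal (MvPolynomial (Module.Free.ChooseBasisIndex F V) F) :=
  MvPolynomial.vanishingIdeal F (CV.coordFn F V '' S)

variable {F V}

lemma mem_vanishingIdeal {S : Set V} {p : MvPolynomial (Module.Free.ChooseBasisIndex F V) F} :
    p ∈ vanishingIdeal F V S ↔ ∀ z ∈ S, CV.evalP F V p z = 0 :=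
  MvPolynomial.mem_vanishingIdeal_iff.trans Set.forall_mem_image

lemma vanishingIdeal_anti {S T : Set V} (h : S ⊆ T) :
    vanishingIdeal F V T ≤ vanishingIdeal F V S :=
  MvPolynomial.vanishingIdeal_anti_mono (Set.image_mono h)

lemma evalP_mul_ne_zero {p q : MvPolynomial (Module.Free.ChooseBasisIndex F V) F} {z : V} :
    CV.evalP F V (p * q) z ≠ 0 ↔ CV.evalP F V p z ≠ 0 ∧ CV.evalP F V q z ≠ 0 := by
  rw [CV.evalP, map_mul, mul_ne_zero_iff, CV.evalP, CV.evalP]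

lemma isOpen_evalP_ne_zero (p : MvPolynomial (Module.Free.ChooseBasisIndex F V) F) :
    IsOpen[CV.zar F V] {z | CV.evalP F V p z ≠ 0} :=
  isOpen_generateFrom_of_mem ⟨p, rfl⟩

lemma isTopologicalBasis_zar :
    @IsTopologicalBasis V (CV.zar F V)
      {U | ∃ p : MvPolynomial (Module.Free.ChooseBasisIndex F V) F,
        U = {z | CV.evalP F V p z ≠ 0}} := by
  let := CV.zar F V
  refine ⟨?_, ?_, rfl⟩
  · rintro _ ⟨p, rfl⟩ _ ⟨q, rfl⟩ z hz
    exact ⟨_, ⟨p * q, rfl⟩, evalP_mul_ne_zero.mpr hz, fun w hw => evalP_mul_ne_zero.mp hw⟩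
  · exact Set.eq_univ_of_forall fun z => ⟨_, ⟨1, rfl⟩, by simp [CV.evalP]⟩

lemma isPrime_vanishingIdeal {S : Set V} (hS : @IsIrreducible V (CV.zar F V) S) :
    (vanishingIdeal F V S).IsPrime := by
  let := CV.zar F V
  refine ⟨(Ideal.ne_top_iff_one _).mpr fun h => ?_, fun {p q} hpq => ?_⟩
  · obtain ⟨z, hz⟩ := hS.nonempty
    simpa [CV.evalP] using mem_vanishingIdeal.mp h z hz
  · by_contra! h
    simp only [mem_vanishingIdeal, not_forall] at h
    obtain ⟨⟨z, hz, hpz⟩, ⟨w, hw, hqw⟩⟩ := h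
    obtain ⟨u, hu, hpqu⟩ := hS.isPreirreducible _ _ (isOpen_evalP_ne_zero p)
      (isOpen_evalP_ne_zero q) ⟨z, hz, hpz⟩ ⟨w, hw, hqw⟩
    exact evalP_mul_ne_zero.mpr hpqu (mem_vanishingIdeal.mp hpq u hu)

/-- The prime of the polynomial ring attached to an irreducible closed subset of a subspace `X` of
`V`. -/
def vanishingPrime {X : Set V}
    (Z : @IrreducibleCloseds X (induced Subtype.val (CV.zar F V))) :
    PrimeSpectrum (MvPolynomial (Module.Free.ChooseBasisIndex F V) F) :=
  letI := CV.zar F V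
  ⟨vanishingIdeal F V (Subtype.val '' (Z : Set X)), isPrime_vanishingIdeal <|
    Z.isIrreducible.image _ continuous_subtype_val.continuousOn⟩

lemma vanishingPrime_strictAnti {X : Set V} :
    StrictAnti (vanishingPrime (F := F) (X := X)) := by
  let := CV.zar F V
  intro Z W hZW
  refine lt_of_le_not_ge (vanishingIdeal_anti (Set.image_mono hZW.le)) fun hWZ => ?_
  obtain ⟨x, hxW, hxZ⟩ := Set.not_subset.mp hZW.not_ge
  obtain ⟨U, hU, hUZ⟩ := isOpen_induced_iff.mp Z.isClosed.isOpen_compl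
  have hxU : x.1 ∈ U := by
    change x ∈ Subtype.val ⁻¹' U
    exact hUZ ▸ hxZ
  obtain ⟨_, ⟨p, rfl⟩, hxp, hpU⟩ := isTopologicalBasis_zar.exists_subset_of_mem_open hxU hU
  have hpZ : p ∈ vanishingIdeal F V (Subtype.val '' (Z : Set X)) := by
    rw [mem_vanishingIdeal]
    rintro _ ⟨z, hz, rfl⟩
    by_contra hpz
    have hzZ : z ∈ (Z : Set X)ᶜ := hUZ ▸ hpU hpz
    exact hzZ hz
  exact hxp (mem_vanishingIdeal.mp (hWZ hpZ) x ⟨x, hxW, rfl⟩)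

lemma coheight_eq_ringKrullDim_quotient {R : Type*} [CommRing R] (P : PrimeSpectrum R) :
    Order.coheight P = ringKrullDim (R ⧸ P.asIdeal) := by
  rw [Order.coheight_eq_krullDim_Ici, ringKrullDim_quotient]
  rfl

lemma dimSet_le_of_forall_ringKrullDim_le {X : Set V} {d : ℕ}
    (h : ∀ Z ⊆ X, @IsIrreducible V (CV.zar F V) Z →
      ringKrullDim (MvPolynomial (Module.Free.ChooseBasisIndex F V) F ⧸ vanishingIdeal F V Z) ≤ d) :
    CV.dimSet F V X ≤ d := by
  let := CV.zar F V
  rw [CV.dimSet, topologicalKrullDim, Order.krullDim_eq_iSup_height]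
  refine iSup_le fun Z => ?_
  calc (Order.height Z : WithBot ℕ∞)
      ≤ Order.height (OrderDual.toDual (vanishingPrime (F := F) Z)) :=
        WithBot.coe_le_coe.mpr <|
          Order.height_le_height_apply_of_strictMono _ vanishingPrime_strictAnti.dual_right Z
    _ = ringKrullDim (_ ⧸ (vanishingPrime (F := F) Z).asIdeal) :=
        coheight_eq_ringKrullDim_quotient _
    _ ≤ d := h _ (Subtype.coe_image_subset X Z) <|
        Z.isIrreducible.image _ continuous_subtype_val.continuousOn

lemma dimSet_add_le_of_forall_ringKrullDim_add_le {X : Set V} {c N : ℕ}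
    (h : ∀ Z ⊆ X, @IsIrreducible V (CV.zar F V) Z →
      ringKrullDim (MvPolynomial (Module.Free.ChooseBasisIndex F V) F ⧸ vanishingIdeal F V Z) + c ≤
        N) :
    CV.dimSet F V X + c ≤ N := by
  let := CV.zar F V
  rcases X.eq_empty_or_nonempty with rfl | ⟨z, hz⟩
  · have hbot : CV.dimSet F V ∅ = ⊥ := Order.krullDim_eq_bot_iff.mpr
      ⟨fun Z => Z.isIrreducible.nonempty.elim fun z _ => z.2⟩
    rw [hbot, WithBot.bot_add]
    exact bot_le
  have hpoint : @IsIrreducible V (CV.zar F V) {z} := isIrreducible_singleton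
  have := isPrime_vanishingIdeal hpoint
  have hcN : c ≤ N := by
    have hle : (c : WithBot ℕ∞) ≤ N :=
      (le_add_of_nonneg_left ringKrullDim_nonneg_of_nontrivial).trans
        (h {z} (Set.singleton_subset_iff.mpr hz) hpoint)
    exact_mod_cast hle
  obtain ⟨d, rfl⟩ := Nat.exists_eq_add_of_le' hcN
  push_cast at h ⊢
  gcongr
  refine dimSet_le_of_forall_ringKrullDim_le fun Z hZ hirr => ?_
  exact ENat.WithBot.add_le_add_natCast_right_iff.mp (h Z hZ hirr)

end ZariskiDimension

open Module TensorProduct LieAlgebra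

section ExtensionOfScalars

variable {F L Q : Type*} [Field F] [Field L] [Algebra F L] [LieRing Q] [LieAlgebra F Q]
  [FiniteDimensional F Q]

lemma killingForm_extendScalars :
    killingForm L (L ⊗[F] Q) = (killingForm F Q).baseChange L :=
  LieModule.traceForm_baseChange F Q Q L

lemma killingForm_tmul (a b : L) (u v : Q) :
    killingForm L (L ⊗[F] Q) (a ⊗ₜ u) (b ⊗ₜ v) =
      a * b * algebraMap F L (killingForm F Q u v) := by
  rw [killingForm_extendScalars, LinearMap.BilinForm.baseChange_tmul, Algebra.smul_def, mul_comm]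

lemma isKilling_extendScalars [IsKilling F Q] : IsKilling L (L ⊗[F] Q) := by
  classical
  let c := Free.chooseBasis F Q
  let c' := (killingForm F Q).dualBasis (IsKilling.killingForm_nondegenerate F Q) c
  refine ⟨eq_bot_iff.mpr fun x hx => (LieSubmodule.mem_bot x).mpr ?_⟩
  refine (Algebra.TensorProduct.basis L c).ext_elem fun i => ?_
  have hxi := (LieIdeal.mem_killingCompl L _ _).mp hx (1 ⊗ₜ c' i) trivial
  rw [← (Algebra.TensorProduct.basis L c).sum_repr x, map_sum] at hxi
  simpa [killingForm_tmul, c', LinearMap.BilinForm.apply_dualBasis_left] using hxi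

lemma liesOver_ofDerivation (D : Derivation F L L) :
    LiesOver (D : L →+ L) (Lie.Derivation.ofDerivation Q D) := by
  intro a b
  induction a with
  | zero => simp
  | add a₁ a₂ h₁ h₂ => simp only [map_add, LinearMap.add_apply, h₁, h₂]; abel
  | tmul s u =>
    induction b with
    | zero => simp
    | add b₁ b₂ h₁ h₂ => simp only [map_add, h₁, h₂]; abel
    | tmul t v =>
      rw [Lie.Derivation.ofDerivation_apply, Lie.Derivation.ofDerivation_apply]
      simp only [killingForm_tmul, LinearMap.rTensor_tmul, AddMonoidHom.coe_coe,
        Derivation.coeFn_coe, Derivation.leibniz, Derivation.map_algebraMap, smul_eq_mul, mul_zero]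
      ring

lemma finrank_ker_baseChange_le {V W : Type*} [AddCommGroup V] [Module F V]
    [FiniteDimensional F V] [AddCommGroup W] [Module F W] (f : V →ₗ[F] W) :
    finrank L (LinearMap.ker (f.baseChange L)) ≤ finrank F (LinearMap.ker f) := by
  have hexact : Function.Exact ((LinearMap.ker f).subtype.baseChange L) (f.baseChange L) :=
    Module.Flat.lTensor_exact L f.exact_subtype_ker_map
  rw [hexact.linearMap_ker_eq, ← finrank_baseChange (R := L) (S := F)]
  exact LinearMap.finrank_range_le _

lemma finrank_cent_one_tmul_le (a : Q) :
    finrank L (cent L ((1 : L) ⊗ₜ[F] a)) ≤ finrank F (cent F a) := by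
  have had : ad L (L ⊗[F] Q) (1 ⊗ₜ a) = (ad F Q a).baseChange L :=
    LieModule.toEnd_baseChange _ _ _ _ a
  rw [cent, had]
  exact finrank_ker_baseChange_le _

end ExtensionOfScalars

section AdPairMatrix

variable {F S T Q κ : Type*} [Field F] [CommRing S] [Algebra F S] [CommRing T] [Algebra F T]
  [LieRing Q] [LieAlgebra F Q]

lemma rTensor_lie (φ : S →ₐ[F] T) (u v : S ⊗[F] Q) :
    φ.toLinearMap.rTensor Q ⁅u, v⁆ =
      ⁅φ.toLinearMap.rTensor Q u, φ.toLinearMap.rTensor Q v⁆ :=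
  (ExtendScalars.map φ LieHom.id).map_lie u v

lemma repr_rTensor {V : Type*} [AddCommGroup V] [Module F V] (c : Basis κ F V) (φ : S →ₐ[F] T)
    (w : S ⊗[F] V) (i : κ) :
    (Algebra.TensorProduct.basis T c).repr (φ.toLinearMap.rTensor V w) i =
      φ ((Algebra.TensorProduct.basis S c).repr w i) := by
  induction w with
  | zero => simp
  | add w₁ w₂ h₁ h₂ => simp [h₁, h₂]
  | tmul s v => simp

variable [Fintype κ] [DecidableEq κ]

/-- The matrix of `w ↦ (⁅u, w⁆, ⁅v, w⁆)`, whose kernel is the intersection of the centralizers of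
`u` and `v`. -/
def adPairMatrix {G : Type*} [LieRing G] [LieAlgebra S G] (c : Basis κ S G) (u v : G) :
    Matrix (κ ⊕ κ) κ S :=
  LinearMap.toMatrix c (c.prod c) ((ad S G u).prod (ad S G v))

lemma rank_adPairMatrix_add_finrank {G : Type*} [LieRing G] [LieAlgebra F G] (c : Basis κ F G)
    (u v : G) :
    (adPairMatrix c u v).rank + finrank F ↥(cent F u ⊓ cent F v) = finrank F G := by
  have := c.finiteDimensional_of_finite
  rw [adPairMatrix, Matrix.rank_eq_finrank_range_toLin _ (c.prod c) c, Matrix.toLin_toMatrix,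
    cent, cent, ← LinearMap.ker_prod]
  exact LinearMap.finrank_range_add_finrank_ker _

lemma adPairMatrix_rTensor (c : Basis κ F Q) (φ : S →ₐ[F] T) (u v : S ⊗[F] Q) :
    adPairMatrix (Algebra.TensorProduct.basis T c) (φ.toLinearMap.rTensor Q u)
        (φ.toLinearMap.rTensor Q v) =
      (adPairMatrix (Algebra.TensorProduct.basis S c) u v).map φ := by
  have hentry (w : S ⊗[F] Q) (i j : κ) :
      (Algebra.TensorProduct.basis T c).repr ⁅φ.toLinearMap.rTensor Q w, 1 ⊗ₜ c j⁆ i =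
        φ ((Algebra.TensorProduct.basis S c).repr ⁅w, 1 ⊗ₜ c j⁆ i) := by
    rw [← repr_rTensor, rTensor_lie]
    simp
  ext (i | i) j <;> simp [adPairMatrix, LinearMap.toMatrix_apply, hentry]

lemma adPairMatrix_one_tmul (c : Basis κ F Q) (u v : Q) :
    adPairMatrix (Algebra.TensorProduct.basis S c) (1 ⊗ₜ u) (1 ⊗ₜ v) =
      (adPairMatrix c u v).map (algebraMap F S) := by
  ext (i | i) j <;> simp [adPairMatrix, LinearMap.toMatrix_apply]

end AdPairMatrix

lemma finrank_map_add_finrank_inf_ker {K W W' : Type*} [Field K] [AddCommGroup W] [Module K W]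
    [FiniteDimensional K W] [AddCommGroup W'] [Module K W'] (f : W →ₗ[K] W')
    (S : Submodule K W) :
    finrank K (S.map f) + finrank K ↥(S ⊓ LinearMap.ker f) = finrank K S := by
  rw [← LinearMap.finrank_range_add_finrank_ker (f.domRestrict S), LinearMap.range_domRestrict,
    LinearMap.ker_domRestrict, ← Submodule.finrank_map_subtype_eq S, Submodule.map_comap_subtype]

section ExtendPair

variable {F S T V Q : Type*} [CommRing F] [CommRing S] [Algebra F S] [CommRing T] [Algebra F T]
  [AddCommGroup V] [Module F V] [AddCommGroup Q] [Module F Q]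

variable (S) in
/-- The extension of scalars of a linear map to `Q × Q`, regarded as a pair of points of
`S ⊗ Q`. -/
def extendPair (P : V →ₗ[F] Q × Q) : S ⊗[F] V →ₗ[S] (S ⊗[F] Q) × (S ⊗[F] Q) :=
  (TensorProduct.prodRight F S S Q Q).toLinearMap ∘ₗ P.baseChange S

lemma extendPair_tmul (P : V →ₗ[F] Q × Q) (s : S) (v : V) :
    extendPair S P (s ⊗ₜ v) = (s ⊗ₜ (P v).1, s ⊗ₜ (P v).2) := rfl

lemma fst_extendPair_rTensor (P : V →ₗ[F] Q × Q) (h : S →ₗ[F] T) (w : S ⊗[F] V) :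
    (extendPair T P (h.rTensor V w)).1 = h.rTensor Q (extendPair S P w).1 := by
  induction w with
  | zero => simp
  | add w₁ w₂ h₁ h₂ => simp [h₁, h₂]
  | tmul s v => rfl

lemma snd_extendPair_rTensor (P : V →ₗ[F] Q × Q) (h : S →ₗ[F] T) (w : S ⊗[F] V) :
    (extendPair T P (h.rTensor V w)).2 = h.rTensor Q (extendPair S P w).2 := by
  induction w with
  | zero => simp
  | add w₁ w₂ h₁ h₂ => simp [h₁, h₂]
  | tmul s v => rfl

end ExtendPair

section GenericPoint

variable (F : Type*) [Field F] (V : Type*) [AddCommGroup V] [Module F V] [FiniteDimensional F V]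

/-- The generic point of `V`, with coordinates the indeterminates of the polynomial ring. Every
point of `V` with coordinates in an `F`-algebra `S` is its image under a unique algebra
homomorphism from the polynomial ring to `S`. -/
def universalPoint : MvPolynomial (Free.ChooseBasisIndex F V) F ⊗[F] V :=
  ∑ j, MvPolynomial.X j ⊗ₜ Free.chooseBasis F V j

variable {F V}

lemma rTensor_universalPoint {S : Type*} [AddCommGroup S] [Module F S]
    (h : MvPolynomial (Free.ChooseBasisIndex F V) F →ₗ[F] S) :
    h.rTensor V (universalPoint F V) =
      ∑ j, h (MvPolynomial.X j) ⊗ₜ Free.chooseBasis F V j := by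
  simp [universalPoint]

lemma rTensor_aeval_coordFn_universalPoint (z : V) :
    (MvPolynomial.aeval (CV.coordFn F V z)).toLinearMap.rTensor V (universalPoint F V) =
      1 ⊗ₜ z := by
  rw [rTensor_universalPoint]
  conv_rhs => rw [← (Free.chooseBasis F V).sum_repr z, tmul_sum]
  refine Finset.sum_congr rfl fun j _ => ?_
  rw [tmul_smul, smul_tmul', smul_eq_mul, mul_one, AlgHom.toLinearMap_apply,
    MvPolynomial.aeval_X, CV.coordFn]

lemma rTensor_derivation_universalPoint {L : Type*} [Field L] [Algebra F L]
    (φ : MvPolynomial (Free.ChooseBasisIndex F V) F →ₐ[F] L) (D : Derivation F L L) :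
    D.toLinearMap.rTensor V (φ.toLinearMap.rTensor V (universalPoint F V)) =
      (Algebra.TensorProduct.basis L (Free.chooseBasis F V)).equivFun.symm
        (evalDerivation F (φ ∘ MvPolynomial.X) D) := by
  simp [rTensor_universalPoint, Basis.equivFun_symm_apply, smul_tmul', evalDerivation]

section Specialization

variable {S Q : Type*} [CommRing S] [Algebra F S] [LieRing Q] [LieAlgebra F Q]
  [FiniteDimensional F Q] {X : Set V} {φ : MvPolynomial (Free.ChooseBasisIndex F V) F →ₐ[F] S}

lemma rTensor_eq_zero_of_forall_mem {W : Type*} [AddCommGroup W] [Module F W]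
    [FiniteDimensional F W] (hφ : ∀ p ∈ vanishingIdeal F V X, φ p = 0)
    {w : MvPolynomial (Free.ChooseBasisIndex F V) F ⊗[F] W}
    (hw : ∀ z ∈ X, (MvPolynomial.aeval (CV.coordFn F V z)).toLinearMap.rTensor W w = 0) :
    φ.toLinearMap.rTensor W w = 0 := by
  let c := Free.chooseBasis F W
  refine (Algebra.TensorProduct.basis S c).ext_elem fun i => ?_
  rw [repr_rTensor, hφ, map_zero, Finsupp.zero_apply]
  refine mem_vanishingIdeal.mpr fun z hz => ?_
  rw [CV.evalP, ← repr_rTensor, hw z hz, map_zero, Finsupp.zero_apply]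

lemma rank_map_lt_of_forall_mem {L m n : Type*} [Field L] [Algebra F L] [Finite m] [Fintype n]
    {φ : MvPolynomial (Free.ChooseBasisIndex F V) F →ₐ[F] L}
    (hφ : ∀ p ∈ vanishingIdeal F V X, φ p = 0)
    {M : Matrix m n (MvPolynomial (Free.ChooseBasisIndex F V) F)} {r : ℕ}
    (hM : ∀ z ∈ X, (M.map (MvPolynomial.aeval (CV.coordFn F V z))).rank < r) :
    (M.map φ).rank < r := by
  by_contra! hr
  obtain ⟨e, f, hdet⟩ := exists_det_submatrix_ne_zero _ hr
  refine hdet ?_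
  rw [Matrix.submatrix_map, ← AlgHom.mapMatrix_apply, ← AlgHom.map_det]
  refine hφ _ (mem_vanishingIdeal.mpr fun z hz => ?_)
  by_contra hminor
  refine (hM z hz).not_ge (le_rank_of_det_submatrix_ne_zero (e := e) (f := f) ?_)
  rwa [Matrix.submatrix_map, ← AlgHom.mapMatrix_apply, ← AlgHom.map_det]

variable {P : V →ₗ[F] Q × Q}

lemma lie_extendPair_universalPoint_eq_zero (hφ : ∀ p ∈ vanishingIdeal F V X, φ p = 0)
    (hX : ∀ z ∈ X, ⁅(P z).1, (P z).2⁆ = 0) :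
    ⁅(extendPair S P (φ.toLinearMap.rTensor V (universalPoint F V))).1,
      (extendPair S P (φ.toLinearMap.rTensor V (universalPoint F V))).2⁆ = 0 := by
  rw [fst_extendPair_rTensor, snd_extendPair_rTensor, ← rTensor_lie]
  refine rTensor_eq_zero_of_forall_mem hφ fun z hz => ?_
  rw [rTensor_lie, ← fst_extendPair_rTensor, ← snd_extendPair_rTensor,
    rTensor_aeval_coordFn_universalPoint]
  simp [extendPair_tmul, hX z hz]

lemma lt_finrank_cent_inf_cent_extendPair_universalPoint {L : Type*} [Field L] [Algebra F L]
    {φ : MvPolynomial (Free.ChooseBasisIndex F V) F →ₐ[F] L} {r : ℕ}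
    (hφ : ∀ p ∈ vanishingIdeal F V X, φ p = 0)
    (hX : ∀ z ∈ X, r < finrank F ↥(cent F (P z).1 ⊓ cent F (P z).2)) :
    r < finrank L ↥(cent L (extendPair L P (φ.toLinearMap.rTensor V (universalPoint F V))).1 ⊓
      cent L (extendPair L P (φ.toLinearMap.rTensor V (universalPoint F V))).2) := by
  classical
  let c := Free.chooseBasis F Q
  have hspecial (z : V) (hz : z ∈ X) :
      ((adPairMatrix (Algebra.TensorProduct.basis _ c) (extendPair _ P (universalPoint F V)).1
        (extendPair _ P (universalPoint F V)).2).map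
          (MvPolynomial.aeval (CV.coordFn F V z))).rank < finrank F Q - r := by
    rw [← adPairMatrix_rTensor, ← fst_extendPair_rTensor, ← snd_extendPair_rTensor,
      rTensor_aeval_coordFn_universalPoint, extendPair_tmul, adPairMatrix_one_tmul,
      Algebra.algebraMap_self, RingHom.coe_id, Matrix.map_id]
    have := rank_adPairMatrix_add_finrank c (P z).1 (P z).2
    have := hX z hz
    omega
  have hgeneric := rank_map_lt_of_forall_mem hφ hspecial
  rw [← adPairMatrix_rTensor, ← fst_extendPair_rTensor, ← snd_extendPair_rTensor] at hgeneric
  have hrank := rank_adPairMatrix_add_finrank (Algebra.TensorProduct.basis L c)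
    (extendPair L P (φ.toLinearMap.rTensor V (universalPoint F V))).1
    (extendPair L P (φ.toLinearMap.rTensor V (universalPoint F V))).2
  rw [finrank_baseChange] at hrank
  omega

end Specialization

end GenericPoint

section Dimension

variable {F V Q : Type*} [Field F] [CharZero F] [AddCommGroup V] [Module F V]
  [FiniteDimensional F V] [LieRing Q] [LieAlgebra F Q] [FiniteDimensional F Q] [IsKilling F Q]
  {P : V →ₗ[F] Q × Q} {X : Set V} {a : Q} {r : ℕ}

lemma finrank_range_evalDerivation_add_two_le {L : Type*} [Field L] [IsAlgClosed L] [Algebra F L]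
    {φ : MvPolynomial (Free.ChooseBasisIndex F V) F →ₐ[F] L}
    (hφ : ∀ p ∈ vanishingIdeal F V X, φ p = 0) (ha : finrank F (cent F a) ≤ r)
    (hcomm : ∀ z ∈ X, ⁅(P z).1, (P z).2⁆ = 0)
    (hirr : ∀ z ∈ X, r < finrank F ↥(cent F (P z).1 ⊓ cent F (P z).2)) :
    finrank L (LinearMap.range (evalDerivation F (φ ∘ MvPolynomial.X))) + 2 ≤
      finrank F (LinearMap.ker P) + finrank F Q + r := by
  have : CharZero L := charZero_of_injective_algebraMap (algebraMap F L).injective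
  have : IsKilling L (L ⊗[F] Q) := isKilling_extendScalars
  set ζ := φ.toLinearMap.rTensor V (universalPoint F V)
  let e := (Algebra.TensorProduct.basis L (Free.chooseBasis F V)).equivFun.symm
  let E := (LinearMap.range (evalDerivation F (φ ∘ MvPolynomial.X))).map e.toLinearMap
  have htangent : (E.map (extendPair L P) : Set ((L ⊗[F] Q) × (L ⊗[F] Q))) ⊆
      derivationVectors F L (extendPair L P ζ).1 (extendPair L P ζ).2 := by
    rintro _ ⟨_, ⟨_, ⟨D, rfl⟩, rfl⟩, rfl⟩
    refine ⟨_, _, liesOver_ofDerivation D, ?_⟩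
    rw [LinearEquiv.coe_coe, ← rTensor_derivation_universalPoint]
    exact Prod.ext (fst_extendPair_rTensor ..) (snd_extendPair_rTensor ..)
  have hbound := finrank_add_two_le_of_subset_derivationVectors
    (lie_extendPair_universalPoint_eq_zero hφ hcomm) ((finrank_cent_one_tmul_le a).trans ha)
    (lt_finrank_cent_inf_cent_extendPair_universalPoint hφ hirr) htangent
  have hker : finrank L ↥(E ⊓ LinearMap.ker (extendPair L P)) ≤ finrank F (LinearMap.ker P) := by
    refine (Submodule.finrank_mono inf_le_right).trans ?_
    rw [extendPair, LinearEquiv.ker_comp]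
    exact finrank_ker_baseChange_le P
  have hE := finrank_map_add_finrank_inf_ker (extendPair L P) E
  rw [LinearEquiv.finrank_map_eq] at hE
  rw [finrank_baseChange] at hbound
  omega

theorem ringKrullDim_quotient_vanishingIdeal_add_two_le
    (hX : @IsIrreducible V (CV.zar F V) X) (ha : finrank F (cent F a) ≤ r)
    (hcomm : ∀ z ∈ X, ⁅(P z).1, (P z).2⁆ = 0)
    (hirr : ∀ z ∈ X, r < finrank F ↥(cent F (P z).1 ⊓ cent F (P z).2)) :
    ringKrullDim (MvPolynomial (Free.ChooseBasisIndex F V) F ⧸ vanishingIdeal F V X) + 2 ≤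
      (finrank F (LinearMap.ker P) + finrank F Q + r : ℕ) := by
  have := isPrime_vanishingIdeal hX
  let A := MvPolynomial (Free.ChooseBasisIndex F V) F ⧸ vanishingIdeal F V X
  let L := AlgebraicClosure (FractionRing A)
  let π := Ideal.Quotient.mkₐ F (vanishingIdeal F V X)
  have : FaithfulSMul A L := (faithfulSMul_iff_algebraMap_injective A L).mpr <| by
    rw [IsScalarTower.algebraMap_eq A (FractionRing A) L]
    exact (algebraMap (FractionRing A) L).injective.comp
      (IsFractionRing.injective A (FractionRing A))
  have : Algebra.IsAlgebraic A L :=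
    (IsFractionRing.comap_isAlgebraic_iff (A := A) (K := FractionRing A)).mpr inferInstance
  have hgen : Algebra.adjoin F (Set.range (π ∘ MvPolynomial.X)) = ⊤ := by
    rw [Set.range_comp, ← AlgHom.map_adjoin, MvPolynomial.adjoin_range_X, Algebra.map_top,
      AlgHom.range_eq_top]
    exact Ideal.Quotient.mkₐ_surjective F _
  have hdim := ringKrullDim_le_finrank_range_evalDerivation (L := L) hgen
  have hbound := finrank_range_evalDerivation_add_two_le (L := L)
    (φ := (IsScalarTower.toAlgHom F A L).comp π)
    (fun p hp => by
      rw [AlgHom.comp_apply, show π p = 0 from Ideal.Quotient.eq_zero_iff_mem.mpr hp, map_zero])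
    ha hcomm hirr
  calc ringKrullDim A + 2
      ≤ (finrank L (LinearMap.range (evalDerivation F (algebraMap A L ∘ π ∘ MvPolynomial.X))) :
          WithBot ℕ∞) + 2 := by gcongr
    _ ≤ _ := by exact_mod_cast hbound

end Dimension

section CentralQuotient

variable {R G Q : Type*} [CommRing R] [LieRing G] [LieAlgebra R G] [LieRing Q] [LieAlgebra R Q]
  {f : G →ₗ⁅R⁆ Q}

lemma derivedSeriesOfIdeal_two_comap_eq_bot (hker : f.ker ≤ center R G) (I : LieIdeal R Q)
    [IsLieAbelian I] : derivedSeriesOfIdeal R G 2 (I.comap f) = ⊥ := by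
  have hcentral : derivedSeriesOfIdeal R G 1 (I.comap f) ≤ center R G := by
    rw [derivedSeriesOfIdeal_succ, derivedSeriesOfIdeal_zero, LieSubmodule.lie_le_iff]
    intro u hu v hv
    refine hker (LieHom.mem_ker.mpr ?_)
    rw [LieHom.map_lie]
    exact congrArg Subtype.val (trivial_lie_zero I I ⟨f u, hu⟩ ⟨f v, hv⟩)
  rw [derivedSeriesOfIdeal_succ, LieSubmodule.lie_eq_bot_iff]
  exact fun u _ v hv => (LieModule.mem_maxTrivSubmodule R G G v).mp (hcentral hv) u

lemma hasTrivialRadical_of_ker_eq_center [IsNoetherian R G] [HasCentralRadical R G]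
    (hf : Function.Surjective f) (hker : f.ker = center R G) : HasTrivialRadical R Q := by
  rw [hasTrivialRadical_iff_no_abelian_ideals]
  intro I hI
  have hsolvable : IsSolvable (I.comap f) := IsSolvable.mk (R := R) <|
    (LieIdeal.derivedSeries_eq_bot_iff _ 2).mpr (derivedSeriesOfIdeal_two_comap_eq_bot hker.le I)
  have hle : I.comap f ≤ f.ker := by
    rw [hker, ← radical_eq_center]
    exact (LieIdeal.solvable_iff_le_radical R G _).mp hsolvable
  rw [eq_bot_iff]
  intro q hq
  obtain ⟨v, rfl⟩ := hf q
  exact LieHom.mem_ker.mp (hle hq)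

variable (t : LieSubalgebra R G) [t.IsCartanSubalgebra]

lemma center_le_of_isCartanSubalgebra : (center R G).toSubmodule ≤ t.toSubmodule := by
  intro v hv
  change v ∈ t
  rw [← LieSubalgebra.IsCartanSubalgebra.self_normalizing (H := t),
    LieSubalgebra.mem_normalizer_iff']
  intro y _
  rw [(LieModule.mem_maxTrivSubmodule R G G v).mp hv y]
  exact t.zero_mem

lemma isCartanSubalgebra_map (hf : Function.Surjective f)
    (hker : f.ker.toSubmodule ≤ t.toSubmodule) : (t.map f).IsCartanSubalgebra where
  nilpotent := by
    have hrange : (f.comp t.incl).range = t.map f := by ext; simp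
    rw [← hrange]
    exact LieHom.isNilpotent_range _
  self_normalizing := by
    refine le_antisymm (fun w hw => ?_) (t.map f).le_normalizer
    obtain ⟨v, rfl⟩ := hf w
    refine (LieSubalgebra.mem_map f t _).mpr ⟨v, ?_, rfl⟩
    rw [← LieSubalgebra.IsCartanSubalgebra.self_normalizing (H := t),
      LieSubalgebra.mem_normalizer_iff]
    intro y hy
    obtain ⟨u, hu, huv⟩ := (LieSubalgebra.mem_map f t _).mp <|
      (LieSubalgebra.mem_normalizer_iff _ _).mp hw (f y) ⟨y, hy, rfl⟩
    have hsub : ⁅v, y⁆ - u ∈ t := hker <| LieHom.mem_ker.mpr <| by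
      rw [map_sub, LieHom.map_lie, huv, sub_self]
    exact sub_add_cancel ⁅v, y⁆ u ▸ t.add_mem hsub hu

end CentralQuotient

section Reduction

lemma finrank_add_finrank_ker_of_surjective {K W W' : Type*} [Field K] [AddCommGroup W]
    [Module K W] [FiniteDimensional K W] [AddCommGroup W'] [Module K W'] {f : W →ₗ[K] W'}
    (hf : Function.Surjective f) : finrank K W' + finrank K (LinearMap.ker f) = finrank K W := by
  rw [← f.finrank_range_add_finrank_ker, LinearMap.range_eq_top.mpr hf, finrank_top]

variable {K G Q : Type*} [Field K] [LieRing G] [LieAlgebra K G]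
  [LieRing Q] [LieAlgebra K Q] {f : G →ₗ⁅K⁆ Q}

lemma map_cent_le (f : G →ₗ⁅K⁆ Q) (x : G) : (cent K x).map (f : G →ₗ[K] Q) ≤ cent K (f x) := by
  rintro _ ⟨v, hv, rfl⟩
  change ⁅f x, f v⁆ = 0
  rw [← LieHom.map_lie, mem_cent.mp hv, map_zero]

variable [FiniteDimensional K G]

lemma finrank_cent_inf_cent_le [FiniteDimensional K Q] (f : G →ₗ⁅K⁆ Q) (x y : G) :
    finrank K ↥(cent K x ⊓ cent K y) ≤
      finrank K ↥(cent K (f x) ⊓ cent K (f y)) + finrank K f.ker := by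
  rw [← finrank_map_add_finrank_inf_ker (f : G →ₗ[K] Q)]
  have himage : (cent K x ⊓ cent K y).map (f : G →ₗ[K] Q) ≤ cent K (f x) ⊓ cent K (f y) :=
    (Submodule.map_inf_le _).trans (inf_le_inf (map_cent_le f x) (map_cent_le f y))
  exact add_le_add (Submodule.finrank_mono himage) (Submodule.finrank_mono inf_le_right)

lemma finrank_map_add_finrank_ker {t : LieSubalgebra K G}
    (hker : f.ker.toSubmodule ≤ t.toSubmodule) :
    finrank K (t.map f) + finrank K f.ker = finrank K t := by
  have h := finrank_map_add_finrank_inf_ker (f : G →ₗ[K] Q) t.toSubmodule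
  rwa [← LieHom.ker_toSubmodule, inf_eq_right.mpr hker] at h

variable [IsAlgClosed K] [CharZero K]

lemma dimSet_add_two_le_of_ker_eq_center [HasCentralRadical K G] (t : LieSubalgebra K G)
    [t.IsCartanSubalgebra] (hf : Function.Surjective f) (hker : f.ker = center K G)
    {X : Set (G × G)} (hX : X ⊆ Cirr K G t) :
    CV.dimSet K (G × G) X + 2 ≤ (finrank K G + finrank K t : ℕ) := by
  have : FiniteDimensional K Q := Module.Finite.of_surjective (f : G →ₗ[K] Q) hf
  have := hasTrivialRadical_of_ker_eq_center hf hker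
  have hkert : f.ker.toSubmodule ≤ t.toSubmodule := hker ▸ center_le_of_isCartanSubalgebra t
  have := isCartanSubalgebra_map t hf hkert
  obtain ⟨a, ha⟩ := exists_cent_le K (t.map f)
  have hrank := finrank_map_add_finrank_ker hkert
  have hdim : finrank K Q + finrank K f.ker = finrank K G :=
    finrank_add_finrank_ker_of_surjective (f := (f : G →ₗ[K] Q)) hf
  have hcomm : ∀ z ∈ X, ⁅f z.1, f z.2⁆ = 0 := fun z hz => by
    rw [← LieHom.map_lie, show ⁅z.1, z.2⁆ = 0 from (hX hz).1, map_zero]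
  have hirregular : ∀ z ∈ X,
      finrank K (t.map f) < finrank K ↥(cent K (f z.1) ⊓ cent K (f z.2)) := fun z hz => by
    have hz' : finrank K t < finrank K ↥(cent K z.1 ⊓ cent K z.2) := (hX hz).2
    have hle := finrank_cent_inf_cent_le f z.1 z.2
    omega
  let P := (f : G →ₗ[K] Q).prodMap (f : G →ₗ[K] Q)
  have hdimP := finrank_add_finrank_ker_of_surjective (f := P) (hf.prodMap hf)
  rw [finrank_prod, finrank_prod] at hdimP
  refine dimSet_add_le_of_forall_ringKrullDim_add_le (c := 2) fun Z hZ hirr => ?_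
  have hbound := ringKrullDim_quotient_vanishingIdeal_add_two_le (P := P) hirr
    (Submodule.finrank_mono ha) (fun z hz => hcomm z (hZ hz)) (fun z hz => hirregular z (hZ hz))
  refine hbound.trans (Nat.cast_le.mpr ?_)
  have : finrank K (t.map f).toSubmodule = finrank K (t.map f) := rfl
  omega

end Reduction

end CommutingVariety

theorem irregular_codim_ge_two_general
    (hred : LieAlgebra.radical k g = LieAlgebra.center k g)
    (t : LieSubalgebra k g) (ht : t.IsCartanSubalgebra)
    (X : Set (g × g)) (hXsub : X ⊆ Cirr k g t) :
    CV.dimSet k (g × g) X + 2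
      ≤ (((Module.finrank k g + Module.finrank k ↥t : ℕ) : ℕ∞) : WithBot ℕ∞) := by
  have : LieAlgebra.HasCentralRadical k g := ⟨hred⟩
  have hker : (LieDerivation.ad k g).rangeRestrict.ker = LieAlgebra.center k g := by
    rw [← LieDerivation.ad_ker_eq_center k g]
    ext x
    rw [LieHom.mem_ker, LieHom.mem_ker, ← LieSubalgebra.coe_zero_iff_zero,
      LieHom.rangeRestrict_apply]
  exact CommutingVariety.dimSet_add_two_le_of_ker_eq_center t
    (LieDerivation.ad k g).surjective_rangeRestrict hker hXsub

/-- The irregular locus of the commuting variety has codimension at least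
two:  every irreducible component `X` of `C^irr` (an irreducible subset of `C^irr`, maximal
among the irreducible subsets of `C^irr`, for the Zariski topology) satisfies
`dim X ≤ dim g + rk g - 2`, i.e. `dim X + 2 ≤ dim C`. -/
theorem irregular_codim_ge_two
    (hred : LieAlgebra.radical k g = LieAlgebra.center k g) (hnc : ¬IsLieAbelian g)
    (t : LieSubalgebra k g) (ht : t.IsCartanSubalgebra)
    (X : Set (g × g)) (hXsub : X ⊆ Cirr k g t)
    (hXirr : @IsIrreducible (g × g) (CV.zar k (g × g)) X)
    (hXmax : ∀ X' : Set (g × g), X ⊆ X' → X' ⊆ Cirr k g t →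
      @IsIrreducible (g × g) (CV.zar k (g × g)) X' → X' = X) :
    CV.dimSet k (g × g) X + 2
      ≤ (((Module.finrank k g + Module.finrank k ↥t : ℕ) : ℕ∞) : WithBot ℕ∞) := by
  exact irregular_codim_ge_two_general k g hred t ht X hXsub
end
end
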